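/- arXiv:1312.6465 — 2 statements merged into one kernel-verified Lean document; each statement's English description precedes it below -/
import Mathlib

section
/- For every finite simple graph Γ there exist a finite tree T and a quasi-isometric group embedding of G(Γ) into G(T), where both groups carry word metrics with respect to their vertex generating sets. -/
/-!
Let `T` be the tree whose vertices are the self-avoiding paths of `Γ`, including the empty path,
where a path is joined to each of its one-step extensions. Adjacent nonempty paths end at adjacent
vertices of `Γ`, so `x ↦ ∏ (paths ending at x)` defines a homomorphism `f : G(Γ) → G(T)`
(`exists_isPathMap`).

The main claim (`IsPathMap.exists_stableWord`) is that if `a = (v₁, …, v_k)` is a path and `w` is a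
reduced word of `G(Γ)` without `v₁, …, v_{k-1}`, then no occurrence of the letter `a` in `f(w)`
cancels. The occurrences of `a` come from those of `v_k` in `w`. In a subword `v_k^{±1} u v_k^{∓1}`
with `u` free of `v_k`, reducedness provides a letter `y` of `u` adjacent to `v_k`; it is none of
`v₁, …, v_k`, so `(v₁, …, v_k, y)` is a neighbour of `a` in `T`, and by induction it survives in
`f(u)`. Hence `f(u)` is not in the subgroup generated by the vertices commuting with `a`, and the
two letters `a` do not cancel. The last step is Britton's lemma, applied in the HNN extension of
`G(T)` whose stable letter commutes with that subgroup; `G(T)` maps to it by sending `a` to the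
stable letter and fixing the other generators (`toStable`).

Applied to the paths of length one, the claim says that a word for `f(g)` contains the letter `(x)`
at least as often as `x` occurs in a reduced word for `g`, so `‖g‖ ≤ |V| ‖f(g)‖`
(`IsPathMap.raagNorm_le`). This gives both injectivity and the lower quasi-isometry bound; the
upper bound holds for every homomorphism between finitely generated groups.
-/

/-! Right-angled Artin groups in the "opposite" convention:
generators are vertices, and two generators commute iff the vertices are NOT adjacent. -/

/-- The commutation relators for the right-angled Artin group (opposite convention):
one commutator for each pair of distinct non-adjacent vertices. -/
def raagRels {V : Type*} (Γ : SimpleGraph V) : Set (FreeGroup V) :=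
  {r | ∃ u v : V, u ≠ v ∧ ¬ Γ.Adj u v ∧
    r = FreeGroup.of u * FreeGroup.of v * (FreeGroup.of u)⁻¹ * (FreeGroup.of v)⁻¹}

/-- The right-angled Artin group `G(Γ)` (opposite convention). -/
abbrev Raag {V : Type*} (Γ : SimpleGraph V) : Type _ := PresentedGroup (raagRels Γ)

/-- The vertex generators of `G(Γ)`. -/
abbrev Raag.of {V : Type*} (Γ : SimpleGraph V) (v : V) : Raag Γ := PresentedGroup.of v

/-- The element of `G(Γ)` represented by a word: a list of letters, where the letter `(v, b)`
stands for `v` if `b = true` and for `v⁻¹` if `b = false`. -/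
def wordProd {V : Type*} (Γ : SimpleGraph V) (w : List (V × Bool)) : Raag Γ :=
  (w.map fun l => if l.2 then Raag.of Γ l.1 else (Raag.of Γ l.1)⁻¹).prod

/-- A word is reduced if no shorter word represents the same element of `G(Γ)`. -/
def IsReducedWord {V : Type*} (Γ : SimpleGraph V) (w : List (V × Bool)) : Prop :=
  ∀ w' : List (V × Bool), wordProd Γ w' = wordProd Γ w → w.length ≤ w'.length

/-- The word length of `g` with respect to a generating set `S` of a group:
the least length of a list of elements of `S ∪ S⁻¹` whose product is `g`. -/
noncomputable def wordLength {G : Type*} [Group G] (S : Set G) (g : G) : ℕ :=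
  sInf {n | ∃ l : List G, (∀ x ∈ l, x ∈ S ∨ x⁻¹ ∈ S) ∧ l.prod = g ∧ l.length = n}

/-- The (right-invariant) word metric associated to a generating set. -/
noncomputable def wordDist {G : Type*} [Group G] (S : Set G) (x y : G) : ℝ :=
  (wordLength S (y * x⁻¹) : ℝ)

/-- Word length in `G(Γ)` with respect to the vertex generating set. -/
noncomputable def raagNorm {V : Type*} (Γ : SimpleGraph V) (g : Raag Γ) : ℕ :=
  wordLength (Set.range (Raag.of Γ)) g

/-- The word metric on `G(Γ)` with respect to the vertex generating set. -/
noncomputable def raagDist {V : Type*} (Γ : SimpleGraph V) (x y : Raag Γ) : ℝ :=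
  wordDist (Set.range (Raag.of Γ)) x y

/-- A quasi-isometric group embedding: an injective group homomorphism which
is a quasi-isometric embedding with respect to the given metrics. -/
def IsQIEmbedding {G H : Type*} [Group G] [Group H] (f : G →* H)
    (dG : G → G → ℝ) (dH : H → H → ℝ) : Prop :=
  Function.Injective f ∧ ∃ C : ℝ, 1 ≤ C ∧ ∀ x y : G,
    dG x y / C - C ≤ dH (f x) (f y) ∧ dH (f x) (f y) ≤ C * dG x y + C

/-- The support of `g ∈ G(Γ)`: vertices occurring in some reduced word representing `g`. -/
def raagSupp {V : Type*} (Γ : SimpleGraph V) (g : Raag Γ) : Set V :=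
  {v | ∃ w : List (V × Bool), IsReducedWord Γ w ∧ wordProd Γ w = g ∧ ∃ b, (v, b) ∈ w}

/-- A cancellation of the vertex `v` in the word `w`: a subword `v^{±1} w' v^{∓1}` where the
support of the element represented by `w'` is disjoint from the link of `v`. -/
def HasCancellationOf {V : Type*} (Γ : SimpleGraph V) (w : List (V × Bool)) (v : V) : Prop :=
  ∃ (w₁ w' w₂ : List (V × Bool)) (b : Bool),
    w = w₁ ++ (v, b) :: (w' ++ (v, !b) :: w₂) ∧
    ∀ u ∈ raagSupp Γ (wordProd Γ w'), ¬ Γ.Adj v u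

/-- An innermost cancellation of the vertex `v` in the word `w`: a cancellation
`v^{±1} w' v^{∓1}` in which moreover no letter of `w'` involves `v`. -/
def HasInnermostCancellationOf {V : Type*} (Γ : SimpleGraph V) (w : List (V × Bool)) (v : V) :
    Prop :=
  ∃ (w₁ w' w₂ : List (V × Bool)) (b : Bool),
    w = w₁ ++ (v, b) :: (w' ++ (v, !b) :: w₂) ∧
    (∀ u ∈ raagSupp Γ (wordProd Γ w'), ¬ Γ.Adj v u) ∧
    ∀ b' : Bool, (v, b') ∉ w'

/-- A covering of simple graphs: a graph homomorphism which is bijective on neighbor sets. -/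
structure IsGraphCovering {V' V : Type*} (Γ' : SimpleGraph V') (Γ : SimpleGraph V)
    (p : V' → V) : Prop where
  adj : ∀ {x y : V'}, Γ'.Adj x y → Γ.Adj (p x) (p y)
  bijOn : ∀ x : V', Set.BijOn p (Γ'.neighborSet x) (Γ.neighborSet (p x))

/-- A universal cover of a connected graph `Γ`: a covering whose total graph is a tree. -/
def IsUniversalCover {V' V : Type*} (Γ' : SimpleGraph V') (Γ : SimpleGraph V)
    (p : V' → V) : Prop :=
  IsGraphCovering Γ' Γ p ∧ Γ'.IsTree

section Phi

variable {V' V : Type*} [LinearOrder V'] [DecidableEq V]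

/-- The lifts in `T` of a vertex `v`, listed in increasing order. -/
def liftVerts (p : V' → V) (T : Finset V') (v : V) : List V' :=
  (T.filter fun t => p t = v).sort (· ≤ ·)

/-- The lifts in `T` of a vertex `v`, in increasing order, as vertices of the induced subgraph. -/
def liftSubVerts (p : V' → V) (T : Finset V') (v : V) : List (↥(T : Set V')) :=
  (liftVerts p T v).pmap (fun t ht => (⟨t, ht⟩ : ↥(T : Set V')))
    (fun t ht => by
      have : t ∈ T := (Finset.mem_filter.mp ((Finset.mem_sort _).mp ht)).1
      exact Finset.mem_coe.mpr this)

/-- `φ(Γ,T)` sends each vertex `v` of `Γ` to the product, in increasing order,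
of the lifts of `v` lying in `T`.  This predicate singles out the homomorphism `φ(Γ,T)`. -/
def IsPhi (Γ : SimpleGraph V) (Γ' : SimpleGraph V') (p : V' → V) (T : Finset V')
    (φ : Raag Γ →* Raag (Γ'.induce (T : Set V'))) : Prop :=
  ∀ v : V, φ (Raag.of Γ v) =
    ((liftSubVerts p T v).map (Raag.of (Γ'.induce (T : Set V')))).prod

/-- The `φ(Γ,T)`-homomorphic word of a word `w`: each letter `x^{e}` of `w` is replaced by the
word `(t₁ t₂ ⋯ t_k)^{e}` where `t₁ < t₂ < ⋯ < t_k` are the lifts of `x` lying in `T`. -/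
def homWord (p : V' → V) (T : Finset V') (w : List (V × Bool)) :
    List (↥(T : Set V') × Bool) :=
  w.flatMap fun l =>
    if l.2 then (liftSubVerts p T l.1).map (fun t => (t, true))
    else ((liftSubVerts p T l.1).reverse).map (fun t => (t, false))

/-- `φ(Γ,T)` is `F`-surviving: for every reduced word `w` in `G(Γ)` and every `v ∈ F`, the
`φ(Γ,T)`-homomorphic word of `w` has no cancellation of `v`. -/
def IsSurviving (Γ : SimpleGraph V) (Γ' : SimpleGraph V') (p : V' → V) (T : Finset V')
    (F : Set V') : Prop :=
  ∀ w : List (V × Bool), IsReducedWord Γ w →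
    ∀ (v : V') (hv : v ∈ (T : Set V')), v ∈ F →
      ¬ HasCancellationOf (Γ'.induce (T : Set V')) (homWord p T w) ⟨v, hv⟩

end Phi

/-- The element of `G(Γ)` represented by a single letter. -/
def letterVal {V : Type*} (Γ : SimpleGraph V) (l : V × Bool) : Raag Γ :=
  if l.2 then Raag.of Γ l.1 else (Raag.of Γ l.1)⁻¹

/-! ### Words and word length in `G(Γ)` -/

section Words

variable {V : Type*} (Γ : SimpleGraph V)

@[simp] lemma wordProd_nil : wordProd Γ [] = 1 := rfl

@[simp] lemma wordProd_cons (l : V × Bool) (w : List (V × Bool)) :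
    wordProd Γ (l :: w) = letterVal Γ l * wordProd Γ w := by
  simp [wordProd, letterVal]

@[simp] lemma wordProd_append (w w' : List (V × Bool)) :
    wordProd Γ (w ++ w') = wordProd Γ w * wordProd Γ w' := by
  simp [wordProd]

lemma letterVal_not (x : V) (b : Bool) : letterVal Γ (x, !b) = (letterVal Γ (x, b))⁻¹ := by
  cases b <;> simp [letterVal]

lemma raagNorm_wordProd_le (w : List (V × Bool)) : raagNorm Γ (wordProd Γ w) ≤ w.length := by
  refine Nat.sInf_le ⟨w.map (letterVal Γ), ?_, ?_, by simp⟩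
  · intro g hg
    obtain ⟨⟨v, b⟩, -, rfl⟩ := List.mem_map.1 hg
    cases b <;> simp [letterVal]
  · rfl

lemma exists_wordProd_of_list (L : List (Raag Γ))
    (hL : ∀ g ∈ L, g ∈ Set.range (Raag.of Γ) ∨ g⁻¹ ∈ Set.range (Raag.of Γ)) :
    ∃ w : List (V × Bool), wordProd Γ w = L.prod ∧ w.length = L.length := by
  induction L with
  | nil => exact ⟨[], rfl, rfl⟩
  | cons g L ih =>
    obtain ⟨w, hw, hlen⟩ := ih fun h hh => hL h (List.mem_cons_of_mem _ hh)
    rcases hL g List.mem_cons_self with ⟨v, hv⟩ | ⟨v, hv⟩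
    · exact ⟨(v, true) :: w, by simp [letterVal, hv, hw], by simp [hlen]⟩
    · exact ⟨(v, false) :: w, by simp [letterVal, hv, hw], by simp [hlen]⟩

lemma exists_geodesic_word (g : Raag Γ) :
    ∃ w : List (V × Bool), wordProd Γ w = g ∧ w.length = raagNorm Γ g := by
  have hne : {n | ∃ l : List (Raag Γ), (∀ x ∈ l, x ∈ Set.range (Raag.of Γ) ∨
      x⁻¹ ∈ Set.range (Raag.of Γ)) ∧ l.prod = g ∧ l.length = n}.Nonempty := by
    have hg : g ∈ Subgroup.closure (Set.range (Raag.of Γ)) := by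
      rw [PresentedGroup.closure_range_of]; trivial
    rw [← Subgroup.mem_toSubmonoid, Subgroup.closure_toSubmonoid] at hg
    obtain ⟨l, hl, hp⟩ := Submonoid.exists_list_of_mem_closure hg
    exact ⟨_, l, hl, hp, rfl⟩
  obtain ⟨l, hl, hp, hlen⟩ := Nat.sInf_mem hne
  obtain ⟨w, hw, hwl⟩ := exists_wordProd_of_list Γ l hl
  exact ⟨w, hw.trans hp, hwl.trans hlen⟩

lemma isReducedWord_of_length_eq {w : List (V × Bool)}
    (h : w.length = raagNorm Γ (wordProd Γ w)) : IsReducedWord Γ w := by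
  intro w' hw'
  rw [h, ← hw']
  exact raagNorm_wordProd_le Γ w'

variable {Γ} in
lemma IsReducedWord.middle {p u s : List (V × Bool)} (h : IsReducedWord Γ (p ++ (u ++ s))) :
    IsReducedWord Γ u := by
  intro u' hu'
  have := h (p ++ (u' ++ s)) (by simp [hu'])
  simp only [List.length_append] at this
  omega

lemma raagNorm_mul_le (g h : Raag Γ) : raagNorm Γ (g * h) ≤ raagNorm Γ g + raagNorm Γ h := by
  obtain ⟨w, rfl, hw⟩ := exists_geodesic_word Γ g
  obtain ⟨w', rfl, hw'⟩ := exists_geodesic_word Γ h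
  rw [← hw, ← hw', ← wordProd_append, ← List.length_append]
  exact raagNorm_wordProd_le Γ _

lemma raagNorm_one : raagNorm Γ 1 = 0 := Nat.le_zero.1 (raagNorm_wordProd_le Γ [])

lemma eq_one_of_raagNorm_eq_zero {g : Raag Γ} (h : raagNorm Γ g = 0) : g = 1 := by
  obtain ⟨w, rfl, hw⟩ := exists_geodesic_word Γ g
  rw [h, List.length_eq_zero_iff] at hw
  simp [hw]

lemma of_commute {u v : V} (h : ¬ Γ.Adj u v) : Commute (Raag.of Γ u) (Raag.of Γ v) := by
  by_cases huv : u = v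
  · subst huv; exact Commute.refl _
  have : PresentedGroup.mk (raagRels Γ) (FreeGroup.of u * FreeGroup.of v * (FreeGroup.of u)⁻¹ *
      (FreeGroup.of v)⁻¹) = 1 := PresentedGroup.one_of_mem ⟨u, v, huv, h, rfl⟩
  simp only [map_mul, map_inv] at this
  rwa [mul_inv_eq_one, mul_inv_eq_iff_eq_mul] at this

/-- A map of the vertices of `Γ` to a group `G` which sends distinct non-adjacent vertices to
commuting elements extends to a homomorphism on `G(Γ)`. -/
def raagLift {G : Type*} [Group G] (F : V → G)
    (hF : ∀ u v, u ≠ v → ¬ Γ.Adj u v → Commute (F u) (F v)) : Raag Γ →* G :=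
  PresentedGroup.toGroup (f := F) (by
    rintro r ⟨u, v, huv, h, rfl⟩
    simp [(hF u v huv h).eq])

@[simp] lemma raagLift_of {G : Type*} [Group G] (F : V → G)
    (hF : ∀ u v, u ≠ v → ¬ Γ.Adj u v → Commute (F u) (F v)) (v : V) :
    raagLift Γ F hF (Raag.of Γ v) = F v := PresentedGroup.toGroup.of _

/-- In a reduced word, between two opposite occurrences `x^{±1}`, `x^{∓1}` of a vertex there is
a letter which does not commute with `x`. -/
lemma IsReducedWord.exists_adj {x : V} {b : Bool} {p u s : List (V × Bool)}
    (h : IsReducedWord Γ (p ++ (x, b) :: (u ++ (x, !b) :: s))) :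
    ∃ l ∈ u, Γ.Adj x l.1 := by
  by_contra! hcon
  have hc : Commute (letterVal Γ (x, b)) (wordProd Γ u) := by
    clear h
    induction u with
    | nil => simp
    | cons l u ih =>
      rw [wordProd_cons]
      refine Commute.mul_right ?_ (ih fun m hm => hcon m (List.mem_cons_of_mem _ hm))
      have := of_commute Γ (hcon l List.mem_cons_self)
      unfold letterVal
      split_ifs <;> simp [this]
  have := h (p ++ (u ++ s)) (by
    simp only [wordProd_append, wordProd_cons, letterVal_not]
    rw [← mul_assoc (letterVal Γ (x, b)), hc.eq]
    group)
  simp at this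

end Words

/-! ### Counting a vertex of `T` by means of an HNN extension -/

section Britton

variable {P : Type*} (T : SimpleGraph P) (a : P)

/-- The subgroup of `G(T)` generated by the vertices other than `a` which commute with `a`. -/
def starSub : Subgroup (Raag T) := Subgroup.closure (Raag.of T '' {b | b ≠ a ∧ ¬ T.Adj a b})

/-- The subgroup of `G(T)` generated by the vertices other than `a`. -/
def avoidSub : Subgroup (Raag T) := Subgroup.closure (Raag.of T '' {b | b ≠ a})

/-- The HNN extension of `G(T)` whose stable letter commutes with `starSub T a`. -/
abbrev StableExt : Type _ :=
  HNNExtension (Raag T) (starSub T a) (starSub T a) (MulEquiv.refl _)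

variable {T a} in
lemma commute_t_of {h : Raag T} (hh : h ∈ starSub T a) :
    Commute (HNNExtension.t : StableExt T a) (HNNExtension.of h) :=
  HNNExtension.t_mul_of (φ := MulEquiv.refl (starSub T a)) ⟨h, hh⟩

open Classical in
/-- The homomorphism from `G(T)` to the HNN extension which sends `a` to the stable letter and
every other vertex to itself. -/
noncomputable def toStable : Raag T →* StableExt T a :=
  raagLift T (fun b => if b = a then HNNExtension.t else HNNExtension.of (Raag.of T b)) (by
    have key : ∀ v, v ≠ a → ¬ T.Adj a v →
        Commute (HNNExtension.t : StableExt T a) (HNNExtension.of (Raag.of T v)) :=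
      fun v hv h => commute_t_of (Subgroup.subset_closure ⟨v, ⟨hv, h⟩, rfl⟩)
    intro u v huv h
    split_ifs with hu hv hv
    · exact absurd (hu.trans hv.symm) huv
    · subst hu; exact key v hv h
    · subst hv; exact (key u hu fun h' => h h'.symm).symm
    · exact (of_commute T h).map _)

lemma toStable_of_self : toStable T a (Raag.of T a) = HNNExtension.t := by
  simp [toStable]

lemma toStable_of_ne {b : P} (h : b ≠ a) :
    toStable T a (Raag.of T b) = HNNExtension.of (Raag.of T b) := by
  simp [toStable, h]

lemma toStable_of_mem {g : Raag T} (hg : g ∈ avoidSub T a) :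
    toStable T a g = HNNExtension.of g := by
  have : avoidSub T a ≤ (toStable T a).eqLocus HNNExtension.of := by
    rw [avoidSub, Subgroup.closure_le]
    rintro _ ⟨b, hb, rfl⟩
    exact toStable_of_ne T a hb
  exact this hg

lemma starSub_le_avoidSub : starSub T a ≤ avoidSub T a :=
  Subgroup.closure_mono (Set.image_mono fun _ h => h.1)

variable {T a} in
lemma starSub_le_avoidSub_of_adj {a' : P} (h : T.Adj a a') : starSub T a ≤ avoidSub T a' :=
  Subgroup.closure_mono (Set.image_mono (by
    rintro b ⟨-, hb⟩ rfl
    exact hb h))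

/-- The exponent `±1` of a letter. -/
def sgn (b : Bool) : ℤˣ := if b then 1 else -1

lemma sgn_ne {b b' : Bool} (h : sgn b ≠ sgn b') : b' = !b := by
  revert h; cases b <;> cases b' <;> simp [sgn]

open HNNExtension NormalWord

/-- Reduced words of the HNN extension `StableExt T a`. -/
abbrev StableWord : Type _ := ReducedWord (Raag T) (starSub T a) (starSub T a)

lemma toSubgroup_starSub (u : ℤˣ) : toSubgroup (starSub T a) (starSub T a) u = starSub T a := by
  rcases Int.units_eq_one_or u with rfl | rfl <;> rfl

/-- Multiplying by a power `t^{±1}` of the stable letter lengthens a reduced word by at most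
one. -/
lemma exists_stableWord_t_mul (u : ℤˣ) (W : StableWord T a) :
    ∃ W' : StableWord T a, W'.prod (MulEquiv.refl _) =
      (t ^ (u : ℤ) * W.prod (MulEquiv.refl _) : StableExt T a) ∧
      W'.toList.length ≤ W.toList.length + 1 := by
  obtain ⟨g, L, hL⟩ := W
  by_cases hc : ∀ y ∈ L.head?, g ∈ toSubgroup (starSub T a) (starSub T a) u → u = y.1
  · exact ⟨⟨1, (u, g) :: L, List.isChain_cons.2 ⟨hc, hL⟩⟩,
      by simp [ReducedWord.prod, mul_assoc], by simp⟩
  · push Not at hc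
    obtain ⟨⟨u', g'⟩, hy, hg, hu⟩ := hc
    -- `t^u g t^{-u} = g` for `g` in `starSub T a`, so the new letter cancels the first one
    cases L with
    | nil => simp at hy
    | cons z L =>
      simp only [List.head?_cons, Option.mem_def, Option.some.injEq] at hy
      subst hy
      refine ⟨⟨g * g', L, (List.isChain_cons.1 hL).2⟩, ?_, by simp; omega⟩
      rw [toSubgroup_starSub] at hg
      have hu' : u' = -u := by
        rcases Int.units_eq_one_or u with rfl | rfl <;>
          rcases Int.units_eq_one_or u' with rfl | rfl <;> simp_all
      subst hu'
      have hcomm := (commute_t_of hg).zpow_left (u : ℤ)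
      simp only [ReducedWord.prod, List.map_cons, List.prod_cons, map_mul, Units.val_neg]
      rw [← mul_assoc (t ^ (u : ℤ)) (of g), hcomm.eq, zpow_neg]
      group

/-- Every word of length `n` in the vertices of `T` is represented by a reduced word of the HNN
extension with at most `n` stable letters. -/
lemma exists_stableWord_le (z : List (P × Bool)) :
    ∃ W : StableWord T a, W.prod (MulEquiv.refl _) = toStable T a (wordProd T z) ∧
      W.toList.length ≤ z.length := by
  induction z with
  | nil => exact ⟨ReducedWord.empty _ _ _, by simp [ReducedWord.prod], by simp⟩
  | cons l z ih =>
    obtain ⟨W, hW, hlen⟩ := ih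
    obtain ⟨b, e⟩ := l
    by_cases hb : b = a
    · subst hb
      obtain ⟨W', hW', hlen'⟩ := exists_stableWord_t_mul T b (sgn e) W
      refine ⟨W', ?_, by simp; omega⟩
      rw [hW', hW, wordProd_cons, map_mul]
      congr 1
      cases e <;> simp [letterVal, sgn, toStable_of_self]
    · refine ⟨⟨letterVal T (b, e) * W.head, W.toList, W.chain⟩, ?_, by simp; omega⟩
      rw [wordProd_cons, map_mul, ← hW]
      cases e <;> simp [letterVal, toStable_of_ne T a hb, ReducedWord.prod, mul_assoc]

lemma length_eq_of_prod_eq {W W' : StableWord T a}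
    (h : W.prod (MulEquiv.refl _) = W'.prod (MulEquiv.refl _)) :
    W.toList.length = W'.toList.length := by
  have := congrArg List.length (ReducedWord.map_fst_eq_and_of_prod_eq _ h).1
  simpa using this

end Britton

/-! ### Maps to groups of path trees -/

section Main

open HNNExtension NormalWord

variable {V P : Type*} [DecidableEq V] {Γ : SimpleGraph V} {T : SimpleGraph P}
  {f : Raag Γ →* Raag T} {a : P} {x : V}

omit [DecidableEq V] in
lemma map_wordProd_mem_avoidSub (hf : ∀ y, y ≠ x → f (Raag.of Γ y) ∈ avoidSub T a)
    {w : List (V × Bool)} (hw : ∀ l ∈ w, l.1 ≠ x) : f (wordProd Γ w) ∈ avoidSub T a := by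
  induction w with
  | nil => simp
  | cons l w ih =>
    rw [wordProd_cons, map_mul]
    refine mul_mem ?_ (ih fun m hm => hw m (List.mem_cons_of_mem _ hm))
    have := hf _ (hw l List.mem_cons_self)
    unfold letterVal
    split_ifs
    · exact this
    · rw [map_inv]; exact inv_mem this

/-- If `a` occurs exactly once in the image of `x` and in no image of another vertex, and no
`x^{±1} u x^{∓1}` in `w` allows the corresponding letters `a` to cancel, then `f(w)` is given by
a reduced word of the HNN extension with one stable letter for each `x` in `w`. -/
lemma exists_stableWord_eq (hf : ∀ y, y ≠ x → f (Raag.of Γ y) ∈ avoidSub T a)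
    {A : Raag T} (hA : A ∈ starSub T a) (hx : f (Raag.of Γ x) = Raag.of T a * A)
    (w : List (V × Bool))
    (hw : ∀ p u s b, w = p ++ (x, b) :: (u ++ (x, !b) :: s) → (∀ l ∈ u, l.1 ≠ x) →
      f (wordProd Γ u) ∉ starSub T a) :
    ∃ W : StableWord T a, W.prod (MulEquiv.refl _) = toStable T a (f (wordProd Γ w)) ∧
      W.toList.length = (w.map Prod.fst).count x ∧
      ∃ u r, w = u ++ r ∧ (∀ l ∈ u, l.1 ≠ x) ∧ W.head = f (wordProd Γ u) ∧
        ∀ y ∈ W.toList.head?, ∃ b s, r = (x, b) :: s ∧ y.1 = sgn b := by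
  induction w with
  | nil => exact ⟨ReducedWord.empty _ _ _, by simp [ReducedWord.prod], by simp,
      [], [], by simp⟩
  | cons l w ih =>
    obtain ⟨W, hW, hlen, u, r, rfl, hu, hhead, hr⟩ := ih fun p u s b h =>
      hw (l :: p) u s b (by rw [h]; rfl)
    obtain ⟨v, e⟩ := l
    by_cases hv : v = x
    · subst hv
      -- `f(x)^{±1}` maps to `t^{±1} A^{±1}` because `A` commutes with `t`
      have hval : toStable T a (f (letterVal Γ (v, e))) =
          t ^ (sgn e : ℤ) * of (A ^ (sgn e : ℤ)) := by
        have h1 : toStable T a (f (Raag.of Γ v)) = t * of A := by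
          rw [hx, map_mul, toStable_of_self, toStable_of_mem T a (starSub_le_avoidSub T a hA)]
        cases e
        · simp [letterVal, sgn, h1, ((commute_t_of hA).inv_inv).eq]
        · simp [letterVal, sgn, h1]
      have hA' : A ^ (sgn e : ℤ) ∈ starSub T a := zpow_mem hA _
      refine ⟨⟨1, (sgn e, A ^ (sgn e : ℤ) * W.head) :: W.toList,
        List.isChain_cons.2 ⟨?_, W.chain⟩⟩, ?_, by simp [hlen],
        [], (v, e) :: (u ++ r), by simp, by simp, by simp, by simp⟩
      · intro y hy hmem
        obtain ⟨b, s, rfl, hb⟩ := hr y hy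
        by_contra hne
        rw [hb] at hne
        dsimp only at hmem
        rw [toSubgroup_starSub, Subgroup.mul_mem_cancel_left _ hA', hhead] at hmem
        exact hw [] u s e (by rw [sgn_ne hne]; rfl) hu hmem
      · rw [wordProd_cons, map_mul, map_mul, hval, ← hW]
        simp [ReducedWord.prod, mul_assoc]
    · refine ⟨⟨f (letterVal Γ (v, e)) * W.head, W.toList, W.chain⟩, ?_, by simp [hlen, hv],
        (v, e) :: u, r, rfl, ?_, by simp [hhead], hr⟩
      · have hval : toStable T a (f (letterVal Γ (v, e))) = of (f (letterVal Γ (v, e))) := by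
          have := map_wordProd_mem_avoidSub (w := [(v, e)]) hf (by simpa using hv)
          exact toStable_of_mem T a (by simpa using this)
        rw [wordProd_cons, map_mul, map_mul, hval, ← hW]
        simp [ReducedWord.prod, mul_assoc]
      · simpa [hv] using hu

/-- The properties of the map from `G(Γ)` to the group of the tree of self-avoiding paths:
`σ a` is the path of `Γ` (listed from its last vertex to its first) attached to the vertex `a` of
`T`, and `f` sends a vertex `x` to a product in which the `a` whose path ends at `x` occur once
each. -/
structure IsPathMap (Γ : SimpleGraph V) (T : SimpleGraph P) (σ : P → List V)
    (f : Raag Γ →* Raag T) : Prop where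
  nodup : ∀ a, (σ a).Nodup
  root : ∀ x, ∃ a, σ a = [x]
  ext : ∀ a x τ y, σ a = x :: τ → Γ.Adj x y → y ∉ x :: τ → ∃ a', T.Adj a a' ∧ σ a' = y :: x :: τ
  map_of_mem : ∀ a x τ, σ a = x :: τ → ∃ A ∈ starSub T a, f (Raag.of Γ x) = Raag.of T a * A
  map_of_avoid : ∀ a x, (σ a).head? ≠ some x → f (Raag.of Γ x) ∈ avoidSub T a

variable {σ : P → List V}

/-- Let `a` carry the path `x :: τ` and let `w` be a reduced word avoiding `τ`. Then no letter `a`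
cancels in `f(w)`. If `x^{±1} u x^{∓1}` occurs in `w`, then `u` contains a neighbour `y` of `x`, and
`y :: x :: τ` is the path of a neighbour `a'` of `a`; by induction on the number of vertices not on
the path, `a'` survives in `f(u)`, so `f(u)` is not in `starSub T a`. -/
lemma IsPathMap.exists_stableWord (hf : IsPathMap Γ T σ f) [Fintype V] (n : ℕ) :
    ∀ (a : P) (x : V) (τ : List V), σ a = x :: τ → Fintype.card V ≤ (σ a).length + n →
    ∀ w : List (V × Bool), IsReducedWord Γ w → (∀ l ∈ w, l.1 ∉ τ) →
    ∃ W : StableWord T a, W.prod (MulEquiv.refl _) = toStable T a (f (wordProd Γ w)) ∧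
      W.toList.length = (w.map Prod.fst).count x := by
  induction n using Nat.strong_induction_on with
  | _ n ih =>
  intro a x τ ha hn w hw hτ
  obtain ⟨A, hA, hx⟩ := hf.map_of_mem a x τ ha
  obtain ⟨W, hW, hlen, -⟩ := exists_stableWord_eq
    (fun y hy => hf.map_of_avoid a y (by simpa [ha] using hy.symm)) hA hx w (by
      rintro p u s b rfl hu hmem
      obtain ⟨⟨y, e⟩, hl, hadj⟩ := IsReducedWord.exists_adj Γ hw
      have hured : IsReducedWord Γ u :=
        IsReducedWord.middle (p := p ++ [(x, b)]) (s := (x, !b) :: s) (by simpa using hw)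
      have huτ : ∀ l ∈ u, l.1 ∉ x :: τ := fun l hl => by
        simpa using ⟨hu l hl, hτ l (by simp [hl])⟩
      obtain ⟨a', haa', ha'⟩ := hf.ext a x τ y ha hadj (huτ _ hl)
      have hcard : (σ a').length ≤ Fintype.card V := (hf.nodup a').length_le_card
      have hlen' : (σ a').length = (σ a).length + 1 := by simp [ha, ha']
      obtain ⟨W', hW', hWlen'⟩ := ih (n - 1) (by omega) a' y (x :: τ) ha' (by omega) u hured huτ
      have hmem' : f (wordProd Γ u) ∈ avoidSub T a' := starSub_le_avoidSub_of_adj haa' hmem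
      have hzero := length_eq_of_prod_eq T a' (W := W')
        (W' := ⟨f (wordProd Γ u), [], List.isChain_nil⟩)
        (by rw [hW', toStable_of_mem T a' hmem']; simp [ReducedWord.prod])
      rw [hWlen'] at hzero
      exact List.count_eq_zero.1 hzero (List.mem_map.2 ⟨_, hl, rfl⟩))
  exact ⟨W, hW, hlen⟩

/-- For the vertex `a` with path `[x]`, every word representing `f(g)` contains `a` at least as often
as `x` occurs in a reduced word for `g`. Summing over `x` gives the lower bound on lengths. -/
lemma IsPathMap.raagNorm_le (hf : IsPathMap Γ T σ f) [Fintype V] (g : Raag Γ) :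
    raagNorm Γ g ≤ Fintype.card V * raagNorm T (f g) := by
  obtain ⟨w, rfl, hw⟩ := exists_geodesic_word Γ g
  obtain ⟨z, hz, hzlen⟩ := exists_geodesic_word T (f (wordProd Γ w))
  have hcount : ∀ x, (w.map Prod.fst).count x ≤ z.length := by
    intro x
    obtain ⟨a, ha⟩ := hf.root x
    obtain ⟨W, hW, hlen⟩ := hf.exists_stableWord _ a x [] ha (Nat.le_add_left _ _) w
      (isReducedWord_of_length_eq Γ hw) (by simp)
    obtain ⟨W', hW', hlen'⟩ := exists_stableWord_le T a z
    rw [← hlen, length_eq_of_prod_eq T a (hW.trans (hz ▸ hW'.symm))]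
    exact hlen'
  calc raagNorm Γ (wordProd Γ w) = (w.map Prod.fst).length := by rw [← hw, List.length_map]
    _ = ∑ x, (w.map Prod.fst).count x := by
      simpa using (Multiset.sum_count_eq_card (s := Finset.univ)
        (m := (↑(w.map Prod.fst) : Multiset V)) (by simp)).symm
    _ ≤ ∑ _x : V, z.length := Finset.sum_le_sum fun x _ => hcount x
    _ = _ := by simp [hzlen]

omit [DecidableEq V] in
lemma exists_raagNorm_map_le [Fintype V] (f : Raag Γ →* Raag T) :
    ∃ M : ℕ, ∀ g, raagNorm T (f g) ≤ M * raagNorm Γ g := by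
  refine ⟨∑ l : V × Bool, raagNorm T (f (letterVal Γ l)), fun g => ?_⟩
  obtain ⟨w, rfl, hw⟩ := exists_geodesic_word Γ g
  rw [← hw]
  clear hw
  induction w with
  | nil => simp [raagNorm_one]
  | cons l w ih =>
    rw [wordProd_cons, map_mul, List.length_cons, mul_add_one, add_comm]
    refine (raagNorm_mul_le _ _ _).trans (add_le_add ?_ ih)
    exact Finset.single_le_sum (f := fun l => raagNorm T (f (letterVal Γ l)))
      (fun _ _ => Nat.zero_le _) (Finset.mem_univ l)

lemma IsPathMap.isQIEmbedding (hf : IsPathMap Γ T σ f) [Fintype V] :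
    IsQIEmbedding f (raagDist Γ) (raagDist T) := by
  constructor
  · rw [injective_iff_map_eq_one]
    intro g hg
    have := hf.raagNorm_le g
    rw [hg, raagNorm_one, mul_zero, Nat.le_zero] at this
    exact eq_one_of_raagNorm_eq_zero Γ this
  · obtain ⟨M, hM⟩ := exists_raagNorm_map_le (T := T) f
    have hC : (1 : ℝ) ≤ Fintype.card V + M + 1 := by
      have : (0 : ℝ) ≤ Fintype.card V + M := by positivity
      linarith
    refine ⟨Fintype.card V + M + 1, hC, fun g h => ?_⟩
    have h1 : (raagNorm Γ (h * g⁻¹) : ℝ) ≤ Fintype.card V * raagNorm T (f (h * g⁻¹)) := by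
      exact_mod_cast hf.raagNorm_le (h * g⁻¹)
    have h2 : (raagNorm T (f (h * g⁻¹)) : ℝ) ≤ M * raagNorm Γ (h * g⁻¹) := by
      exact_mod_cast hM (h * g⁻¹)
    have e1 : raagDist Γ g h = raagNorm Γ (h * g⁻¹) := rfl
    have e2 : raagDist T (f g) (f h) = raagNorm T (f (h * g⁻¹)) := by
      rw [map_mul, map_inv]; rfl
    rw [e1, e2]
    have n1 : (0 : ℝ) ≤ raagNorm Γ (h * g⁻¹) := by positivity
    have n2 : (0 : ℝ) ≤ raagNorm T (f (h * g⁻¹)) := by positivity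
    have n3 : (0 : ℝ) ≤ Fintype.card V := by positivity
    have n4 : (0 : ℝ) ≤ M := by positivity
    constructor
    · have : (raagNorm Γ (h * g⁻¹) : ℝ) / (Fintype.card V + M + 1) ≤
          raagNorm T (f (h * g⁻¹)) := by
        rw [div_le_iff₀ (by linarith)]
        nlinarith
      linarith
    · nlinarith

/-- If the vertices of `T` are labelled by self-avoiding paths and adjacent labels end at
adjacent vertices, then sending `x` to the product of all vertices whose label ends at `x`
gives a well-defined homomorphism. -/
lemma exists_isPathMap [Fintype P] (nodup : ∀ a, (σ a).Nodup) (root : ∀ x, ∃ a, σ a = [x])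
    (ext : ∀ a x τ y, σ a = x :: τ → Γ.Adj x y → y ∉ x :: τ →
      ∃ a', T.Adj a a' ∧ σ a' = y :: x :: τ)
    (adj : ∀ a b x y, T.Adj a b → (σ a).head? = some x → (σ b).head? = some y → Γ.Adj x y) :
    ∃ f : Raag Γ →* Raag T, IsPathMap Γ T σ f := by
  classical
  let lifts : V → List P := fun x => Finset.univ.toList.filter fun a => (σ a).head? = some x
  have hlifts : ∀ x a, a ∈ lifts x ↔ (σ a).head? = some x := by simp [lifts]
  have hnd : ∀ x, (lifts x).Nodup := fun x => (Finset.nodup_toList _).filter _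
  refine ⟨raagLift Γ (fun x => ((lifts x).map (Raag.of T)).prod) ?_, nodup, root, ext, ?_, ?_⟩
  · intro u v _ huv
    refine Commute.list_prod_left _ _ fun g hg => Commute.list_prod_right _ _ fun h hh => ?_
    obtain ⟨a, ha, rfl⟩ := List.mem_map.1 hg
    obtain ⟨b, hb, rfl⟩ := List.mem_map.1 hh
    exact of_commute T fun hab => huv (adj a b u v hab ((hlifts _ _).1 ha) ((hlifts _ _).1 hb))
  · intro a x τ ha
    have hmem : a ∈ lifts x := (hlifts x a).2 (by simp [ha])
    obtain ⟨l₁, l₂, hl⟩ := List.append_of_mem hmem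
    have hnd' := hnd x
    rw [hl, List.nodup_append, List.nodup_cons] at hnd'
    have hstar : ∀ b ∈ lifts x, b ≠ a → Raag.of T b ∈ starSub T a := fun b hb hne =>
      Subgroup.subset_closure ⟨b, ⟨hne, fun hab => Γ.irrefl
        (adj a b x x hab ((hlifts _ _).1 hmem) ((hlifts _ _).1 hb))⟩, rfl⟩
    have h1 : (l₁.map (Raag.of T)).prod ∈ starSub T a := by
      refine list_prod_mem fun g hg => ?_
      obtain ⟨b, hb, rfl⟩ := List.mem_map.1 hg
      exact hstar b (by simp [hl, hb]) (hnd'.2.2 b hb a List.mem_cons_self)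
    have h2 : (l₂.map (Raag.of T)).prod ∈ starSub T a := by
      refine list_prod_mem fun g hg => ?_
      obtain ⟨b, hb, rfl⟩ := List.mem_map.1 hg
      exact hstar b (by simp [hl, hb]) (by rintro rfl; exact hnd'.2.1.1 hb)
    refine ⟨_, mul_mem h1 h2, ?_⟩
    have hcomm : Commute (l₁.map (Raag.of T)).prod (Raag.of T a) := by
      refine Commute.list_prod_left _ _ fun g hg => ?_
      obtain ⟨b, hb, rfl⟩ := List.mem_map.1 hg
      exact of_commute T fun hba => Γ.irrefl
        (adj b a x x hba ((hlifts _ _).1 (by simp [hl, hb])) ((hlifts _ _).1 hmem))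
    simp only [raagLift_of, hl, List.map_append, List.map_cons, List.prod_append, List.prod_cons]
    rw [← mul_assoc, hcomm.eq, mul_assoc]
  · intro a x ha
    rw [raagLift_of]
    refine list_prod_mem fun g hg => ?_
    obtain ⟨b, hb, rfl⟩ := List.mem_map.1 hg
    refine Subgroup.subset_closure ⟨b, ?_, rfl⟩
    rintro rfl
    exact ha ((hlifts _ _).1 hb)

end Main

/-! ### The tree of self-avoiding paths -/

section PathTree

variable {V : Type*} (Γ : SimpleGraph V)

/-- The self-avoiding paths of `Γ`, including the empty one, each listed from its last vertex to
its first so that `List.cons` extends a path. -/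
abbrev SAPath : Type _ := {l : List V // l.Nodup ∧ l.IsChain Γ.Adj}

/-- The tree of self-avoiding paths: a path is joined to its one-step extensions. -/
def pathTree : SimpleGraph (SAPath Γ) where
  Adj a b := (∃ v, a.1 = v :: b.1) ∨ ∃ v, b.1 = v :: a.1
  symm := ⟨fun _ _ h => h.symm⟩
  loopless := ⟨fun a h => by rcases h with ⟨v, h⟩ | ⟨v, h⟩ <;> simp at h⟩

instance [Finite V] : Finite (SAPath Γ) := by
  have := Fintype.ofFinite V
  classical
  exact Finite.of_injective (β := {l : List V // l.Nodup}) (fun a => ⟨a.1, a.2.1⟩)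
    fun a b h => Subtype.ext (by simpa using h)

/-- The empty path. -/
def SAPath.nil : SAPath Γ := ⟨[], by simp⟩

/-- The path with its last vertex removed. -/
def SAPath.parent (a : SAPath Γ) : SAPath Γ :=
  ⟨a.1.tail, a.2.1.tail, a.2.2.tail⟩

variable {Γ} in
lemma SAPath.parent_adj {a : SAPath Γ} (h : a ≠ SAPath.nil Γ) :
    (pathTree Γ).Adj a a.parent := by
  obtain ⟨l, hl⟩ := a
  cases l with
  | nil => exact absurd rfl h
  | cons v l => exact Or.inl ⟨v, rfl⟩

lemma pathTree_connected : (pathTree Γ).Connected := by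
  have key : ∀ n, ∀ a : SAPath Γ, a.1.length = n → (pathTree Γ).Reachable a (SAPath.nil Γ) := by
    intro n
    induction n with
    | zero =>
      intro a ha
      have : a = SAPath.nil Γ := Subtype.ext (List.length_eq_zero_iff.1 ha)
      rw [this]
    | succ n ih =>
      intro a ha
      have hne : a ≠ SAPath.nil Γ := by rintro rfl; simp [SAPath.nil] at ha
      exact (SAPath.parent_adj hne).reachable.trans (ih _ (by simp [SAPath.parent, ha]))
  have : Nonempty (SAPath Γ) := ⟨SAPath.nil Γ⟩
  exact ⟨fun a b => (key _ a rfl).trans (key _ b rfl).symm⟩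

/-- Each edge joins a unique nonempty path to its parent, so there is one vertex more than
there are edges. -/
lemma pathTree_isTree [Finite V] : (pathTree Γ).IsTree := by
  classical
  rw [SimpleGraph.isTree_iff_connected_and_card]
  refine ⟨pathTree_connected Γ, ?_⟩
  let e : {a : SAPath Γ // a ≠ SAPath.nil Γ} → (pathTree Γ).edgeSet := fun a =>
    ⟨s(a.1, a.1.parent), SAPath.parent_adj a.2⟩
  have he : Function.Bijective e := by
    constructor
    · rintro ⟨a, ha⟩ ⟨b, hb⟩ h
      rcases Sym2.eq_iff.1 (congrArg Subtype.val h) with h | ⟨h1, h2⟩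
      · exact Subtype.ext h.1
      · -- two nonempty paths cannot be each other's parents, by comparing lengths
        exfalso
        have l1 := congrArg (fun c : SAPath Γ => c.1.length) h1
        have l2 := congrArg (fun c : SAPath Γ => c.1.length) h2
        have l3 : a.1.length ≠ 0 := fun h0 => ha (Subtype.ext (List.length_eq_zero_iff.1 h0))
        simp only [SAPath.parent, List.length_tail] at l1 l2
        omega
    · rintro ⟨s, hs⟩
      induction s with
      | h a b =>
      have hs' : (pathTree Γ).Adj a b := hs
      rcases hs' with ⟨v, hv⟩ | ⟨v, hv⟩
      · refine ⟨⟨a, by rintro rfl; simp [SAPath.nil] at hv⟩, Subtype.ext ?_⟩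
        have : a.parent = b := Subtype.ext (by simp [SAPath.parent, hv])
        simp [e, this]
      · refine ⟨⟨b, by rintro rfl; simp [SAPath.nil] at hv⟩, Subtype.ext ?_⟩
        have : b.parent = a := Subtype.ext (by simp [SAPath.parent, hv])
        simp [e, this, Sym2.eq_swap]
  rw [← Nat.card_congr (Equiv.ofBijective e he), ← Finite.card_option]
  exact Nat.card_congr (Equiv.optionSubtypeNe _)

end PathTree

/-- For every finite simple graph `Γ` there exist a finite tree `T` and a
quasi-isometric group embedding of `G(Γ)` into `G(T)`, both groups carrying the word metrics
of their vertex generating sets. -/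
theorem raag_embeds_in_raag_of_tree {V : Type} [Fintype V] [DecidableEq V]
    (Γ : SimpleGraph V) :
    ∃ (n : ℕ) (T : SimpleGraph (Fin n)) (f : Raag Γ →* Raag T),
      T.IsTree ∧ IsQIEmbedding f (raagDist Γ) (raagDist T) := by
  classical
  have : Fintype (SAPath Γ) := Fintype.ofFinite _
  let e := (pathTree Γ).overFinIso rfl
  let σ : Fin (Fintype.card (SAPath Γ)) → List V := fun a => (e.symm a).1
  have hσ : ∀ (l : List V) (hl : l.Nodup ∧ l.IsChain Γ.Adj), σ (e ⟨l, hl⟩) = l := by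
    simp [σ]
  obtain ⟨f, hf⟩ := exists_isPathMap (Γ := Γ) (T := (pathTree Γ).overFin rfl) (σ := σ)
    (fun a => (e.symm a).2.1) (fun x => ⟨e ⟨[x], by simp⟩, hσ _ _⟩)
    (fun a x τ y ha hxy hy => by
      obtain ⟨b, rfl⟩ := e.surjective a
      have hb : b.1 = x :: τ := by simpa [σ] using ha
      have hnd := b.2.1
      have hch := b.2.2
      rw [hb] at hnd hch
      refine ⟨e ⟨y :: x :: τ, List.nodup_cons.2 ⟨hy, hnd⟩,
        List.isChain_cons_cons.2 ⟨hxy.symm, hch⟩⟩, e.map_adj_iff.2 (Or.inr ⟨y, ?_⟩), hσ _ _⟩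
      rw [hb])
    (fun a b x y hab hx hy => by
      obtain ⟨a, rfl⟩ := e.surjective a
      obtain ⟨b, rfl⟩ := e.surjective b
      have hx' : a.1.head? = some x := by simpa [σ] using hx
      have hy' : b.1.head? = some y := by simpa [σ] using hy
      have key : ∀ (c d : SAPath Γ) (z z' v : V), c.1 = v :: d.1 → c.1.head? = some z →
          d.1.head? = some z' → Γ.Adj z z' := by
        intro c d z z' v hcd hz hz'
        have hch := c.2.2
        rw [hcd] at hch hz
        obtain rfl : v = z := by simpa using hz
        exact (List.isChain_cons.1 hch).1 z' hz'
      rcases e.map_adj_iff.1 hab with ⟨v, hv⟩ | ⟨v, hv⟩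
      · exact key a b x y v hv hx' hy'
      · exact (key b a y x v hv hy' hx').symm)
  exact ⟨_, _, f, e.isTree_iff.1 (pathTree_isTree Γ), hf.isQIEmbedding⟩
end

section
/- Let p : Γ̃ → Γ be a universal cover of a finite connected simple graph Γ, with a fixed linear order on V(Γ̃). Let v be a vertex of Γ, write Γ∖v for the induced subgraph of Γ on V(Γ)∖{v}, and let T₀ be a finite subtree of Γ̃. If the composite G(Γ∖v) → G(Γ) → G(T₀) of the natural homomorphism induced by the inclusion Γ∖v ≤ Γ with φ(Γ,T₀) is injective, then for each vertex v′ ∈ p⁻¹(v) there exists a finite subtree T of Γ̃ containing T₀ and v′ such that φ(Γ,T) is {v′}-surviving and injective. -/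
namespace RaagCover

open SimpleGraph

/-! ### Words and homomorphisms out of right-angled Artin groups -/

section Words

variable {V G H : Type*} [Group G] [Group H]

/-- The value of a word under an assignment `f` of group elements to vertices.
For `f = Raag.of Γ` this is `wordProd Γ`. -/
def listVal (f : V → G) (w : List (V × Bool)) : G :=
  (w.map fun l => if l.2 then f l.1 else (f l.1)⁻¹).prod

lemma listVal_nil (f : V → G) : listVal f [] = 1 := rfl

lemma listVal_cons (f : V → G) (l : V × Bool) (w : List (V × Bool)) :
    listVal f (l :: w) = (if l.2 then f l.1 else (f l.1)⁻¹) * listVal f w := by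
  simp [listVal]

lemma listVal_append (f : V → G) (w w' : List (V × Bool)) :
    listVal f (w ++ w') = listVal f w * listVal f w' := by
  simp [listVal]

lemma map_listVal (φ : G →* H) (f : V → G) (w : List (V × Bool)) :
    φ (listVal f w) = listVal (fun x => φ (f x)) w := by
  induction w with
  | nil => simp [listVal]
  | cons l w ih =>
    rw [listVal_cons, listVal_cons, map_mul, ih]
    split_ifs <;> simp

lemma commute_listVal (a : G) (f : V → G) (w : List (V × Bool))
    (h : ∀ l ∈ w, Commute a (f l.1)) : Commute a (listVal f w) := by
  induction w with
  | nil => exact Commute.one_right a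
  | cons l w ih =>
    rw [listVal_cons]
    refine Commute.mul_right ?_ (ih fun l' h' => h l' (List.mem_cons_of_mem _ h'))
    have := h l List.mem_cons_self
    split_ifs
    · exact this
    · exact this.inv_right

lemma raag_commute (Γ : SimpleGraph V) {u v : V} (h : ¬ Γ.Adj u v) :
    Commute (Raag.of Γ u) (Raag.of Γ v) := by
  by_cases huv : u = v
  · subst huv; exact Commute.refl _
  have : (PresentedGroup.mk (raagRels Γ)) (FreeGroup.of u * FreeGroup.of v *
      (FreeGroup.of u)⁻¹ * (FreeGroup.of v)⁻¹) = 1 :=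
    PresentedGroup.one_of_mem ⟨u, v, huv, h, rfl⟩
  simp only [map_mul, map_inv] at this
  have h2 := mul_inv_eq_one.mp this
  exact mul_inv_eq_iff_eq_mul.mp h2

/-- The universal property of `G(Γ)`. -/
def raagLift (Γ : SimpleGraph V) (f : V → G)
    (hf : ∀ u v, u ≠ v → ¬ Γ.Adj u v → Commute (f u) (f v)) : Raag Γ →* G :=
  PresentedGroup.toGroup (f := f) (rels := raagRels Γ) (by
    rintro r ⟨u, v, huv, h, rfl⟩
    have := hf u v huv h
    simp only [map_mul, map_inv, FreeGroup.lift_apply_of]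
    rw [this.eq]; group)

lemma raagLift_of (Γ : SimpleGraph V) (f : V → G)
    (hf : ∀ u v, u ≠ v → ¬ Γ.Adj u v → Commute (f u) (f v)) (v : V) :
    raagLift Γ f hf (Raag.of Γ v) = f v :=
  PresentedGroup.toGroup.of _

lemma exists_word (Γ : SimpleGraph V) (g : Raag Γ) : ∃ w, wordProd Γ w = g := by
  classical
  obtain ⟨x, rfl⟩ := PresentedGroup.mk_surjective _ g
  refine ⟨x.toWord, ?_⟩
  conv_rhs => rw [← FreeGroup.mk_toWord (x := x)]
  generalize x.toWord = L
  have : PresentedGroup.mk (raagRels Γ) = FreeGroup.lift (Raag.of Γ) := by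
    ext a; simp; rfl
  rw [this, FreeGroup.lift_mk]
  unfold wordProd
  congr 2
  funext l
  cases l.2 <;> rfl

lemma exists_reduced (Γ : SimpleGraph V) (g : Raag Γ) :
    ∃ w, IsReducedWord Γ w ∧ wordProd Γ w = g := by
  classical
  have h : ∃ n, ∃ w, wordProd Γ w = g ∧ w.length = n := by
    obtain ⟨w, hw⟩ := exists_word Γ g
    exact ⟨_, w, hw, rfl⟩
  obtain ⟨w, hw, hn⟩ := Nat.find_spec h
  refine ⟨w, fun w' hw' => ?_, hw⟩
  rw [hn]
  exact Nat.find_min' h ⟨w', hw'.trans hw, rfl⟩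

lemma commute_of_supp (Γ : SimpleGraph V) (v : V) (g : Raag Γ)
    (h : ∀ u ∈ raagSupp Γ g, ¬ Γ.Adj v u) : Commute (Raag.of Γ v) g := by
  obtain ⟨w, hw, rfl⟩ := exists_reduced Γ g
  exact commute_listVal _ _ _ fun l hl => raag_commute Γ (h l.1 ⟨w, hw, rfl, l.2, hl⟩)

/-- Deleting the two outer letters of `v^{±1} w' v^{∓1}` does not change the element when `w'`
commutes with `v`. -/
lemma wordProd_remove (Γ : SimpleGraph V) (v : V) (w₁ w' w₂ : List (V × Bool)) (b : Bool)
    (h : Commute (Raag.of Γ v) (wordProd Γ w')) :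
    wordProd Γ (w₁ ++ (v, b) :: (w' ++ (v, !b) :: w₂)) = wordProd Γ (w₁ ++ (w' ++ w₂)) := by
  change listVal _ _ = listVal _ _
  change Commute _ (listVal (Raag.of Γ) w') at h
  simp only [listVal_append, listVal_cons]
  congr 1
  cases b
  · simp only [Bool.false_eq_true, if_false, Bool.not_false, if_true]
    rw [← mul_assoc (listVal _ w'), ← h.eq]; simp [mul_assoc]
  · simp only [Bool.false_eq_true, if_false, Bool.not_true, if_true]
    rw [← mul_assoc, h.eq]; simp [mul_assoc]

lemma reduced_no_cancel (Γ : SimpleGraph V) {v : V} {w w₁ w' w₂ : List (V × Bool)} {b : Bool}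
    (hw : IsReducedWord Γ w) (e : w = w₁ ++ (v, b) :: (w' ++ (v, !b) :: w₂))
    (h : Commute (Raag.of Γ v) (wordProd Γ w')) : False := by
  have h1 := hw (w₁ ++ (w' ++ w₂)) (by rw [e, wordProd_remove Γ v w₁ w' w₂ b h])
  rw [e] at h1
  simp at h1

end Words

/-! ### Splitting `G(X)` over a vertex as an HNN extension -/

section HNN

variable {V H : Type*} [Group H] [DecidableEq V]

open HNNExtension HNNExtension.NormalWord

omit [DecidableEq V] in
lemma toSubgroup_self (A : Subgroup H) (u : ℤˣ) : toSubgroup A A u = A := by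
  unfold toSubgroup
  split_ifs <;> rfl

/-- A word without a pinch at `v` (no subword `v^{±1} w' v^{∓1}` with `w'` free of `v` and of value
in `A`) has a reduced form with exactly one stable letter for each occurrence of `v`, whenever `v`
is evaluated as `t * c` with `c ∈ A` and all other vertices are evaluated in the base group. The
last clause identifies the head of the reduced form, which drives the induction. -/
lemma exists_reducedWord (A : Subgroup H) (v : V) (f : V → H) (c : H) (hc : c ∈ A)
    (F : V → HNNExtension H A A (MulEquiv.refl A)) (hFv : F v = t * of c)
    (hF : ∀ u, u ≠ v → F u = of (f u)) (w : List (V × Bool))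
    (hw : ∀ w₁ w' w₂ b, w = w₁ ++ (v, b) :: (w' ++ (v, !b) :: w₂) → (∀ x ∈ w', x.1 ≠ v) →
      listVal f w' ∉ A) :
    ∃ r : ReducedWord H A A, r.prod (MulEquiv.refl A) = listVal F w ∧
      r.toList.length = w.countP (fun l => l.1 = v) ∧
      ∀ a ∈ r.toList.head?, ∃ w' b w₂, w = w' ++ (v, b) :: w₂ ∧ (∀ x ∈ w', x.1 ≠ v) ∧
        a.1 = (if b then 1 else -1) ∧ listVal f w' = r.head := by
  induction w with
  | nil => exact ⟨ReducedWord.empty H A A, by simp [ReducedWord.prod, listVal_nil], rfl, by simp⟩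
  | cons l w ih =>
    obtain ⟨r, hr, hlen, hhead⟩ := ih fun w₁ w' w₂ b e => hw (l :: w₁) w' w₂ b (by rw [e]; rfl)
    obtain ⟨x, b⟩ := l
    by_cases hx : x = v
    · subst hx
      set d : H := if b then c else c⁻¹ with hd
      have hdA : d ∈ A := by
        rw [hd]; split_ifs
        · exact hc
        · exact A.inv_mem hc
      refine ⟨⟨1, ((if b then 1 else -1), d * r.head) :: r.toList, ?_⟩, ?_, ?_, ?_⟩
      · refine List.isChain_cons.mpr ⟨fun a ha hmem => ?_, r.chain⟩
        obtain ⟨w', b', w₂, e, hn, ha1, hh⟩ := hhead a ha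
        by_contra hne
        have hb : b' = !b := by
          rw [ha1] at hne
          revert hne
          cases b <;> cases b' <;> simp
        subst hb
        refine hw [] w' w₂ b (by rw [e]; rfl) hn ?_
        rw [hh]
        have hmem' : d * r.head ∈ A := by
          rwa [toSubgroup_self] at hmem
        exact (A.mul_mem_cancel_left hdA).mp hmem'
      · rw [listVal_cons, ← hr, hFv]
        simp only [ReducedWord.prod, List.map_cons, List.prod_cons, map_one, one_mul, map_mul]
        have hcomm : t * of c = of c * (t : HNNExtension H A A (MulEquiv.refl A)) :=
          t_mul_of (φ := MulEquiv.refl A) ⟨c, hc⟩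
        cases b
        · simp only [hd, Bool.false_eq_true, if_false]
          rw [hcomm]
          simp [mul_assoc]
        · simp [hd, mul_assoc]
      · simp [hlen]
      · intro a ha
        simp only [List.head?_cons, Option.mem_some_iff] at ha
        subst ha
        exact ⟨[], b, w, rfl, by simp, rfl, rfl⟩
    · refine ⟨⟨(if b then f x else (f x)⁻¹) * r.head, r.toList, r.chain⟩, ?_, ?_, ?_⟩
      · rw [listVal_cons, ← hr]
        simp only [ReducedWord.prod, map_mul, mul_assoc]
        rw [hF x hx]
        cases b <;> simp
      · simp [hlen, hx]
      · intro a ha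
        obtain ⟨w', b', w₂, e, hn, ha1, hh⟩ := hhead a ha
        refine ⟨(x, b) :: w', b', w₂, by rw [e]; rfl, ?_, ha1, ?_⟩
        · intro y hy
          rcases List.mem_cons.mp hy with rfl | hy
          · exact hx
          · exact hn y hy
        · rw [listVal_cons, hh]

/-- The subgroup of `G(X)` generated by the vertices other than `v` that commute with `v`. -/
def perp (X : SimpleGraph V) (v : V) : Subgroup (Raag X) :=
  Subgroup.closure (Raag.of X '' {u | u ≠ v ∧ ¬ X.Adj v u})

omit [DecidableEq V] in
lemma perp_commute (X : SimpleGraph V) (v : V) {g : Raag X} (hg : g ∈ perp X v) :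
    Commute (Raag.of X v) g := by
  refine Subgroup.closure_induction (p := fun g _ => Commute (Raag.of X v) g) ?_ ?_ ?_ ?_ hg
  · rintro _ ⟨u, ⟨-, hu⟩, rfl⟩
    exact raag_commute X hu
  · exact Commute.one_right _
  · exact fun _ _ _ _ h h' => h.mul_right h'
  · exact fun _ _ h => h.inv_right

/-- The homomorphism from `G(X)` to an HNN extension with stable letter `v`. The base group is
all of `G(X)` rather than `G(X∖v)`; only the base letters `u ≠ v` are hit, and this is enough for
counting occurrences of `v`. -/
def toHNN (X : SimpleGraph V) (v : V) :
    Raag X →* HNNExtension (Raag X) (perp X v) (perp X v) (MulEquiv.refl _) :=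
  raagLift X (fun u => if u = v then t else of (Raag.of X u)) (by
    have key : ∀ u, u ≠ v → ¬ X.Adj v u → Commute
        (t : HNNExtension (Raag X) (perp X v) (perp X v) (MulEquiv.refl _))
        (of (Raag.of X u)) := fun u hu h =>
      t_mul_of (φ := MulEquiv.refl (perp X v))
        ⟨Raag.of X u, Subgroup.subset_closure ⟨u, ⟨hu, h⟩, rfl⟩⟩
    intro u w huw h
    by_cases hu : u = v
    · subst hu
      have hw : w ≠ u := fun h => huw h.symm
      simpa [hw] using key w hw h
    · by_cases hw : w = v
      · subst hw
        simpa [hu] using (key u hu (fun h' => h h'.symm)).symm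
      · simpa [hu, hw] using (raag_commute X h).map of)

lemma toHNN_self (X : SimpleGraph V) (v : V) : toHNN X v (Raag.of X v) = t := by
  simp [toHNN, raagLift_of]

lemma toHNN_of_ne (X : SimpleGraph V) {u v : V} (h : u ≠ v) :
    toHNN X v (Raag.of X u) = of (Raag.of X u) := by
  simp [toHNN, raagLift_of, h]

lemma toHNN_list (X : SimpleGraph V) (v : V) (l : List V) (h : v ∉ l) :
    toHNN X v (l.map (Raag.of X)).prod = of (l.map (Raag.of X)).prod := by
  induction l with
  | nil => simp
  | cons u l ih =>
    simp only [List.mem_cons, not_or] at h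
    rw [List.map_cons, List.prod_cons, map_mul, map_mul, ih h.2, toHNN_of_ne X (Ne.symm h.1)]

/-- The number of stable letters in a reduced form of `wordProd X W` is at most the number of
occurrences of `v` in `W`: pinches can be removed one after another. -/
lemma exists_reducedWord_le (X : SimpleGraph V) (v : V) (W : List (V × Bool)) :
    ∃ r : ReducedWord (Raag X) (perp X v) (perp X v),
      r.prod (MulEquiv.refl _) = toHNN X v (wordProd X W) ∧
      r.toList.length ≤ W.countP (fun l => l.1 = v) := by
  induction hn : W.length using Nat.strong_induction_on generalizing W with
  | _ n ih =>
    by_cases h : ∀ w₁ w' w₂ b, W = w₁ ++ (v, b) :: (w' ++ (v, !b) :: w₂) →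
        (∀ x ∈ w', x.1 ≠ v) → listVal (Raag.of X) w' ∉ perp X v
    · obtain ⟨r, hr, hlen, -⟩ := exists_reducedWord (perp X v) v (Raag.of X) 1
        (Subgroup.one_mem _) (fun x => toHNN X v (Raag.of X x)) (by simp [toHNN_self])
        (fun u hu => toHNN_of_ne X hu) W h
      exact ⟨r, by rw [hr, ← map_listVal]; rfl, hlen.le⟩
    · push Not at h
      obtain ⟨w₁, w', w₂, b, e, -, hA⟩ := h
      obtain ⟨r, hr, hlen⟩ := ih (w₁ ++ (w' ++ w₂)).length
        (by rw [← hn, e]; simp) (w₁ ++ (w' ++ w₂)) rfl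
      refine ⟨r, ?_, hlen.trans ?_⟩
      · rw [hr, e, wordProd_remove X v w₁ w' w₂ b (perp_commute X v hA)]
      · rw [e]; simp; omega

end HNN

/-! ### Deck transformations of the universal cover -/

section Deck

variable {V V' : Type*} {Γ : SimpleGraph V} {Γ' : SimpleGraph V'} {p : V' → V}

open Classical in
/-- The neighbour of `a` lying over `c` (junk value `a` if there is none). -/
noncomputable def step (Γ' : SimpleGraph V') (p : V' → V) (a : V') (c : V) : V' :=
  if h : ∃ b, Γ'.Adj a b ∧ p b = c then h.choose else a

lemma step_spec (hp : IsGraphCovering Γ' Γ p) {a : V'} {c : V} (h : Γ.Adj (p a) c) :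
    Γ'.Adj a (step Γ' p a c) ∧ p (step Γ' p a c) = c := by
  have : ∃ b, Γ'.Adj a b ∧ p b = c := (hp.bijOn a).surjOn h
  rw [step, dif_pos this]
  exact this.choose_spec

lemma nbr_unique (hp : IsGraphCovering Γ' Γ p) {a b b' : V'} (h : Γ'.Adj a b) (h' : Γ'.Adj a b')
    (hbb : p b = p b') : b = b' := by
  exact (hp.bijOn a).injOn h h' hbb

/-- The end point of the lift starting at `x'` of the projection of a walk. Walks are read from
their end `x` towards their start `y`. -/
noncomputable def liftEnd (Γ' : SimpleGraph V') (p : V' → V) (x' : V') :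
    {y x : V'} → Γ'.Walk y x → V'
  | _, _, .nil => x'
  | y, _, .cons _ w => step Γ' p (liftEnd Γ' p x' w) (p y)

lemma p_liftEnd (hp : IsGraphCovering Γ' Γ p) {x x' : V'} (hx : p x' = p x) {y : V'}
    (w : Γ'.Walk y x) : p (liftEnd Γ' p x' w) = p y := by
  induction w with
  | nil => exact hx
  | cons h w ih => exact (step_spec hp (by rw [ih hx]; exact (hp.adj h).symm)).2

lemma adj_liftEnd (hp : IsGraphCovering Γ' Γ p) {x x' : V'} (hx : p x' = p x) {y z : V'}
    (h : Γ'.Adj y z) (w : Γ'.Walk z x) :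
    Γ'.Adj (liftEnd Γ' p x' (.cons h w)) (liftEnd Γ' p x' w) :=
  (step_spec hp (by rw [p_liftEnd hp hx w]; exact (hp.adj h).symm)).1.symm

/-- Unique path lifting: in a tree, the lift along the unique path defines a map of covers. -/
lemma exists_cover_hom (hp : IsUniversalCover Γ' Γ p) {x x' : V'} (hx : p x' = p x) :
    ∃ g : V' → V', g x = x' ∧ (∀ y, p (g y) = p y) ∧ ∀ y z, Γ'.Adj y z → Γ'.Adj (g y) (g z) := by
  classical
  obtain ⟨hc, ht⟩ := hp
  have hconn := ht.connected
  have hex : ∀ y, ∃ w : Γ'.Walk y x, w.IsPath := fun y =>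
    ⟨(hconn.preconnected y x).some.toPath.1, (hconn.preconnected y x).some.toPath.2⟩
  choose P hP using hex
  have huniq : ∀ y (w w' : Γ'.Walk y x), w.IsPath → w'.IsPath → w = w' := fun y w w' h h' =>
    congrArg Subtype.val ((ht.isAcyclic.subsingleton_path y x).elim ⟨w, h⟩ ⟨w', h'⟩)
  refine ⟨fun y => liftEnd Γ' p x' (P y), ?_, fun y => p_liftEnd hc hx _, ?_⟩
  · show liftEnd Γ' p x' (P x) = x'
    rw [huniq x (P x) .nil (hP x) Walk.IsPath.nil]; rfl
  have key : ∀ y z (h : Γ'.Adj y z), y ∉ (P z).support →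
      Γ'.Adj (liftEnd Γ' p x' (P y)) (liftEnd Γ' p x' (P z)) := by
    intro y z h hn
    rw [huniq y (P y) (.cons h (P z)) (hP y) ((hP z).cons hn)]
    exact adj_liftEnd hc hx h _
  intro y z h
  by_cases hy : y ∈ (P z).support
  · -- the path from `z` passes through `y`, so it is the edge `zy` followed by the path from `y`
    refine (key z y h.symm fun hz => ?_).symm
    have e1 := huniq y _ _ ((hP z).dropUntil hy) (hP y)
    have e2 := huniq z _ _ ((hP y).dropUntil hz) (hP z)
    have l1 := (P z).length_dropUntil_le_length hy
    have l2 := (P y).length_dropUntil_le_length hz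
    rw [e1] at l1
    rw [e2] at l2
    have l3 : ((P z).dropUntil y hy).length = (P z).length := by rw [e1]; omega
    have h4 := congrArg Walk.length ((P z).take_spec hy)
    rw [Walk.length_append] at h4
    have h5 : ((P z).takeUntil y hy).length = 0 := by omega
    exact h.ne (Walk.eq_of_length_eq_zero h5).symm
  · exact key y z h hy

lemma cover_hom_fixed (hp : IsUniversalCover Γ' Γ p) (g : V' → V') (hg : ∀ y, p (g y) = p y)
    (hadj : ∀ y z, Γ'.Adj y z → Γ'.Adj (g y) (g z)) {x : V'} (hx : g x = x) (y : V') :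
    g y = y := by
  obtain ⟨w⟩ := hp.2.connected.preconnected y x
  induction w with
  | nil => exact hx
  | cons h w ih =>
    have := hadj _ _ h.symm
    rw [ih hx] at this
    exact nbr_unique hp.1 this h.symm (hg _)

/-- The deck group of a universal cover acts transitively on fibres. -/
lemma exists_deck (hp : IsUniversalCover Γ' Γ p) {x x' : V'} (hx : p x' = p x) :
    ∃ g : Γ' ≃g Γ', g x = x' ∧ ∀ y, p (g y) = p y := by
  obtain ⟨g, g1, g2, g3⟩ := exists_cover_hom hp hx
  obtain ⟨k, k1, k2, k3⟩ := exists_cover_hom hp hx.symm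
  have hkg := cover_hom_fixed hp (fun y => k (g y)) (fun y => by rw [k2, g2])
    (fun y z h => k3 _ _ (g3 _ _ h)) (x := x) (by rw [g1, k1])
  have hgk := cover_hom_fixed hp (fun y => g (k y)) (fun y => by rw [g2, k2])
    (fun y z h => g3 _ _ (k3 _ _ h)) (x := x') (by rw [k1, g1])
  refine ⟨⟨⟨g, k, hkg, hgk⟩, ?_⟩, g1, g2⟩
  intro y z
  refine ⟨fun h => ?_, g3 y z⟩
  have h' : Γ'.Adj (k (g y)) (k (g z)) := k3 _ _ h
  rwa [hkg y, hkg z] at h'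

lemma fibre_not_adj (hp : IsGraphCovering Γ' Γ p) {s t : V'} (h : ¬ Γ.Adj (p s) (p t)) :
    ¬ Γ'.Adj s t :=
  fun h' => h (hp.adj h')

/-- A finite set of vertices of a tree is contained in a finite subtree. -/
lemma exists_subtree (ht : Γ'.IsTree) (S : Finset V') (hS : S.Nonempty) :
    ∃ T : Finset V', S ⊆ T ∧ (Γ'.induce (T : Set V')).IsTree := by
  obtain ⟨T, hST, hT⟩ := extend_finset_to_connected ht.connected.preconnected hS
  exact ⟨T, hST, hT, ht.isAcyclic.induce _⟩

end Deck

/-! ### Retractions and the homomorphisms into the group of the universal cover -/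

section Maps

open Classical in
/-- The retraction of `G(X)` that kills the vertices outside `S`. -/
noncomputable def kill {V : Type*} (X : SimpleGraph V) (S : Set V) : Raag X →* Raag X :=
  raagLift X (fun u => if u ∈ S then Raag.of X u else 1) (by
    intro u v _ h
    split_ifs
    · exact raag_commute X h
    · exact Commute.one_right _
    · exact Commute.one_left _
    · exact Commute.one_left _)

section

variable {V : Type*} (X : SimpleGraph V)

lemma kill_mem {S : Set V} {u : V} (h : u ∈ S) : kill X S (Raag.of X u) = Raag.of X u := by
  simp [kill, raagLift_of, h]

lemma kill_notMem {S : Set V} {u : V} (h : u ∉ S) : kill X S (Raag.of X u) = 1 := by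
  simp [kill, raagLift_of, h]

lemma kill_kill (S S' : Set V) (g : Raag X) : kill X S (kill X S' g) = kill X (S ∩ S') g := by
  have : (kill X S).comp (kill X S') = kill X (S ∩ S') := by
    refine PresentedGroup.ext fun u => ?_
    change kill X S (kill X S' (Raag.of X u)) = kill X (S ∩ S') (Raag.of X u)
    by_cases h : u ∈ S'
    · rw [kill_mem X h]
      by_cases h' : u ∈ S
      · rw [kill_mem X h', kill_mem X (Set.mem_inter h' h)]
      · rw [kill_notMem X h', kill_notMem X fun h => h' h.1]
    · rw [kill_notMem X h, kill_notMem X fun h' => h h'.2, map_one]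
  exact DFunLike.congr_fun this g

/-- If no single vertex of the finite set `s` is needed to express `g`, then all of them can be
dropped at once. -/
lemma kill_finset (s : Finset V) (g : Raag X) (h : ∀ t ∈ s, kill X {t}ᶜ g = g) :
    kill X (s : Set V)ᶜ g = g := by
  classical
  induction s using Finset.induction_on with
  | empty =>
    have : kill X ((∅ : Finset V) : Set V)ᶜ = MonoidHom.id _ :=
      PresentedGroup.ext fun u => kill_mem X (by simp)
    rw [this]; rfl
  | insert a s _ ih =>
    have : (((insert a s : Finset V) : Set V)ᶜ) = {a}ᶜ ∩ (s : Set V)ᶜ := by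
      ext; simp
    rw [this, ← kill_kill, ih fun t ht => h t (Finset.mem_insert_of_mem ht),
      h a (Finset.mem_insert_self _ _)]

lemma kill_list (S : Set V) [DecidablePred (· ∈ S)] (l : List V) :
    kill X S (l.map (Raag.of X)).prod = ((l.filter (· ∈ S)).map (Raag.of X)).prod := by
  induction l with
  | nil => simp
  | cons u l ih =>
    rw [List.map_cons, List.prod_cons, map_mul, ih]
    by_cases h : u ∈ S
    · simp [kill_mem X h, h]
    · simp [kill_notMem X h, h]

lemma kill_link_commute (v : V) (g : Raag X) :
    Commute (Raag.of X v) (kill X {u | ¬ X.Adj v u} g) := by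
  obtain ⟨w, rfl⟩ := exists_word X g
  change Commute _ (kill X _ (listVal _ w))
  rw [map_listVal]
  refine commute_listVal _ _ _ fun l _ => ?_
  by_cases h : l.1 ∈ {u | ¬ X.Adj v u}
  · rw [kill_mem X h]; exact raag_commute X h
  · rw [kill_notMem X h]; exact Commute.one_right _

/-- The inclusion `G(X[S]) → G(X)` for an induced subgraph. -/
def incl (S : Set V) : Raag (X.induce S) →* Raag X :=
  raagLift (X.induce S) (fun t => Raag.of X t.1) fun _ _ _ h => raag_commute X h

lemma incl_of (S : Set V) (t : S) : incl X S (Raag.of (X.induce S) t) = Raag.of X t.1 :=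
  raagLift_of _ _ _ _

open Classical in
/-- The retraction `G(X) → G(X[S])` onto the group of an induced subgraph. -/
noncomputable def retr (S : Set V) : Raag X →* Raag (X.induce S) :=
  raagLift X (fun t => if h : t ∈ S then Raag.of (X.induce S) ⟨t, h⟩ else 1) (by
    intro u v _ h
    split_ifs
    · exact raag_commute (X.induce S) h
    · exact Commute.one_right _
    · exact Commute.one_left _
    · exact Commute.one_left _)

lemma retr_of (S : Set V) {t : V} (h : t ∈ S) :
    retr X S (Raag.of X t) = Raag.of (X.induce S) ⟨t, h⟩ := by
  simp [retr, raagLift_of, h]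

lemma incl_injective (S : Set V) : Function.Injective (incl X S) := by
  have : (retr X S).comp (incl X S) = MonoidHom.id _ := by
    refine PresentedGroup.ext fun t => ?_
    change retr X S (incl X S (Raag.of _ t)) = Raag.of _ t
    rw [incl_of, retr_of X S t.2]
  exact Function.LeftInverse.injective (g := retr X S) fun g => DFunLike.congr_fun this g

/-- The automorphism of `G(X)` induced by a graph automorphism. -/
def shift (g : X ≃g X) : Raag X →* Raag X :=
  raagLift X (fun t => Raag.of X (g t)) fun _ _ _ h =>
    raag_commute X fun h' => h (g.map_adj_iff.mp h')

lemma shift_of (g : X ≃g X) (t : V) : shift X g (Raag.of X t) = Raag.of X (g t) :=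
  raagLift_of _ _ _ _

lemma shift_injective (g : X ≃g X) : Function.Injective (shift X g) := by
  have : (shift X g.symm).comp (shift X g) = MonoidHom.id _ := by
    refine PresentedGroup.ext fun t => ?_
    change shift X g.symm (shift X g (Raag.of _ t)) = Raag.of _ t
    rw [shift_of, shift_of, RelIso.symm_apply_apply]
  exact Function.LeftInverse.injective (g := shift X g.symm) fun h => DFunLike.congr_fun this h

lemma kill_shift (g : X ≃g X) (t : V) (h : Raag X) :
    kill X {g t}ᶜ (shift X g h) = shift X g (kill X {t}ᶜ h) := by
  have : (kill X {g t}ᶜ).comp (shift X g) = (shift X g).comp (kill X {t}ᶜ) := by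
    refine PresentedGroup.ext fun u => ?_
    change kill X {g t}ᶜ (shift X g (Raag.of X u)) = shift X g (kill X {t}ᶜ (Raag.of X u))
    rw [shift_of]
    by_cases hu : u = t
    · subst hu
      rw [kill_notMem X (by simp), kill_notMem X (by simp), map_one]
    · rw [kill_mem X (by simpa using hu), kill_mem X (by simpa using hu), shift_of]
  exact DFunLike.congr_fun this h

end

variable {V V' : Type*} [LinearOrder V'] [DecidableEq V]
variable {Γ : SimpleGraph V} {Γ' : SimpleGraph V'} {p : V' → V}

lemma mem_liftVerts {T : Finset V'} {u : V} {t : V'} :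
    t ∈ liftVerts p T u ↔ t ∈ T ∧ p t = u := by
  simp [liftVerts]

lemma nodup_liftVerts (T : Finset V') (u : V) : (liftVerts p T u).Nodup :=
  Finset.sort_nodup _ _

lemma mem_liftSubVerts {T : Finset V'} {u : V} {t : (T : Set V')} :
    t ∈ liftSubVerts p T u ↔ p t = u := by
  unfold liftSubVerts
  rw [List.mem_pmap]
  constructor
  · rintro ⟨a, ha, rfl⟩
    exact (mem_liftVerts.mp ha).2
  · intro h
    exact ⟨t.1, mem_liftVerts.mpr ⟨t.2, h⟩, rfl⟩

lemma nodup_liftSubVerts (T : Finset V') (u : V) : (liftSubVerts p T u).Nodup :=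
  (nodup_liftVerts T u).pmap fun _ _ _ _ h => congrArg Subtype.val h

lemma map_val_liftSubVerts (T : Finset V') (u : V) :
    (liftSubVerts p T u).map Subtype.val = liftVerts p T u := by
  simp [liftSubVerts, List.map_pmap]

/-- The order of the factors in the product of lifts is immaterial. -/
lemma prod_lifts_eq (hp : IsGraphCovering Γ' Γ p) (T : Finset V') (u : V) (l : List V')
    (hl : l.Nodup) (hmem : ∀ t, t ∈ l ↔ t ∈ T ∧ p t = u) :
    (l.map (Raag.of Γ')).prod = ((liftVerts p T u).map (Raag.of Γ')).prod := by
  have hperm : l.Perm (liftVerts p T u) :=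
    (List.perm_ext_iff_of_nodup hl (nodup_liftVerts T u)).mpr fun t => by
      rw [hmem, mem_liftVerts]
  refine (hperm.map _).prod_eq' (List.pairwise_map.mpr ?_)
  refine List.Pairwise.imp_of_mem (R := fun _ _ => True) ?_ (List.pairwise_of_forall (by simp))
  intro s t hs ht _
  refine raag_commute Γ' (fibre_not_adj hp ?_)
  rw [((hmem s).mp hs).2, ((hmem t).mp ht).2]
  exact Γ.irrefl

/-- `φ(Γ,S)` followed by the inclusion `G(S) → G(Γ')`, for a finite vertex set `S`. -/
def phiHom (hp : IsGraphCovering Γ' Γ p) (S : Finset V') : Raag Γ →* Raag Γ' :=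
  raagLift Γ (fun u => ((liftVerts p S u).map (Raag.of Γ')).prod) (by
    intro u v _ h
    refine Commute.list_prod_left _ _ fun a ha => Commute.list_prod_right _ _ fun b hb => ?_
    obtain ⟨s, hs, rfl⟩ := List.mem_map.mp ha
    obtain ⟨t, ht, rfl⟩ := List.mem_map.mp hb
    refine raag_commute Γ' (fibre_not_adj hp ?_)
    rwa [(mem_liftVerts.mp hs).2, (mem_liftVerts.mp ht).2])

lemma phiHom_of (hp : IsGraphCovering Γ' Γ p) (S : Finset V') (u : V) :
    phiHom hp S (Raag.of Γ u) = ((liftVerts p S u).map (Raag.of Γ')).prod :=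
  raagLift_of _ _ _ _

lemma incl_phi (hp : IsGraphCovering Γ' Γ p) {T : Finset V'}
    {φ : Raag Γ →* Raag (Γ'.induce (T : Set V'))} (hφ : IsPhi Γ Γ' p T φ) (g : Raag Γ) :
    incl Γ' T (φ g) = phiHom hp T g := by
  have : (incl Γ' T).comp φ = phiHom hp T := by
    refine PresentedGroup.ext fun u => ?_
    change incl Γ' T (φ (Raag.of Γ u)) = phiHom hp T (Raag.of Γ u)
    rw [hφ, phiHom_of, map_list_prod, List.map_map, ← map_val_liftSubVerts, List.map_map]
    congr 2
  exact DFunLike.congr_fun this g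

lemma exists_phi (hp : IsGraphCovering Γ' Γ p) (T : Finset V') :
    ∃ φ : Raag Γ →* Raag (Γ'.induce (T : Set V')), IsPhi Γ Γ' p T φ := by
  refine ⟨(retr Γ' T).comp (phiHom hp T), fun u => ?_⟩
  rw [MonoidHom.comp_apply, phiHom_of, map_list_prod, ← map_val_liftSubVerts, List.map_map,
    List.map_map]
  congr 2
  funext t
  exact retr_of _ _ t.2

lemma kill_phiHom (hp : IsGraphCovering Γ' Γ p) {S T : Finset V'} (h : S ⊆ T) (g : Raag Γ) :
    kill Γ' S (phiHom hp T g) = phiHom hp S g := by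
  have : (kill Γ' S).comp (phiHom hp T) = phiHom hp S := by
    refine PresentedGroup.ext fun u => ?_
    change kill Γ' S (phiHom hp T (Raag.of Γ u)) = phiHom hp S (Raag.of Γ u)
    rw [phiHom_of, phiHom_of, kill_list]
    refine prod_lifts_eq hp S u _ ((nodup_liftVerts T u).filter _) fun t => ?_
    simp only [List.mem_filter, mem_liftVerts, decide_eq_true_eq, Finset.mem_coe]
    exact ⟨fun h' => ⟨h'.2, h'.1.2⟩, fun h' => ⟨⟨h h'.1, h'.2⟩, h'.1⟩⟩
  exact DFunLike.congr_fun this g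

lemma shift_phiHom (hp : IsGraphCovering Γ' Γ p) (S : Finset V') (k : Γ' ≃g Γ')
    (hk : ∀ y, p (k y) = p y) (g : Raag Γ) :
    shift Γ' k (phiHom hp S g) = phiHom hp (S.image k) g := by
  have : (shift Γ' k).comp (phiHom hp S) = phiHom hp (S.image k) := by
    refine PresentedGroup.ext fun u => ?_
    change shift Γ' k (phiHom hp S (Raag.of Γ u)) = phiHom hp (S.image k) (Raag.of Γ u)
    rw [phiHom_of, phiHom_of, map_list_prod, List.map_map,
      ← prod_lifts_eq hp (S.image k) u ((liftVerts p S u).map k)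
        ((nodup_liftVerts S u).map k.injective), List.map_map]
    · congr 2
    · intro t
      simp only [List.mem_map, mem_liftVerts, Finset.mem_image]
      constructor
      · rintro ⟨s, ⟨hs, hu⟩, rfl⟩
        exact ⟨⟨s, hs, rfl⟩, by rw [hk, hu]⟩
      · rintro ⟨⟨s, hs, rfl⟩, hu⟩
        exact ⟨s, ⟨hs, by rw [← hu, hk]⟩, rfl⟩
  exact DFunLike.congr_fun this g

/-- Killing the vertices of `Γ` outside `Q` corresponds to killing all their lifts. -/
lemma kill_preimage_phiHom (hp : IsGraphCovering Γ' Γ p) (S : Finset V') (Q : Set V)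
    (g : Raag Γ) : kill Γ' (p ⁻¹' Q) (phiHom hp S g) = phiHom hp S (kill Γ Q g) := by
  classical
  have : (kill Γ' (p ⁻¹' Q)).comp (phiHom hp S) = (phiHom hp S).comp (kill Γ Q) := by
    refine PresentedGroup.ext fun u => ?_
    change kill Γ' (p ⁻¹' Q) (phiHom hp S (Raag.of Γ u)) = phiHom hp S (kill Γ Q (Raag.of Γ u))
    rw [phiHom_of, kill_list]
    by_cases hu : u ∈ Q
    · rw [kill_mem Γ hu, phiHom_of]
      congr 2
      rw [List.filter_eq_self]
      intro t ht
      simpa [(mem_liftVerts.mp ht).2] using hu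
    · rw [kill_notMem Γ hu, map_one]
      have : (liftVerts p S u).filter (· ∈ p ⁻¹' Q) = [] := by
        rw [List.filter_eq_nil_iff]
        intro t ht
        simpa [(mem_liftVerts.mp ht).2] using hu
      rw [this]; simp
  exact DFunLike.congr_fun this g

/-- Vertices of `Γ'` outside `S` do not occur in `phiHom hp S g`. -/
lemma kill_self_phiHom (hp : IsGraphCovering Γ' Γ p) (S : Finset V') (g : Raag Γ) :
    kill Γ' S (phiHom hp S g) = phiHom hp S g :=
  kill_phiHom hp (Finset.Subset.refl S) g

lemma wordProd_homWord {T : Finset V'} {φ : Raag Γ →* Raag (Γ'.induce (T : Set V'))}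
    (hφ : IsPhi Γ Γ' p T φ) (w : List (V × Bool)) :
    wordProd (Γ'.induce (T : Set V')) (homWord p T w) = φ (wordProd Γ w) := by
  change listVal _ _ = φ (listVal _ w)
  rw [map_listVal]
  induction w with
  | nil => rfl
  | cons l w ih =>
    have e : homWord p T (l :: w) = (if l.2 then (liftSubVerts p T l.1).map (fun t => (t, true))
      else ((liftSubVerts p T l.1).reverse).map (fun t => (t, false))) ++ homWord p T w := rfl
    rw [e, listVal_append, listVal_cons, ih]
    congr 1
    split_ifs
    · rw [hφ]
      simp [listVal, Function.comp_def]
    · rw [hφ, List.prod_inv_reverse]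
      simp [listVal, Function.comp_def]

lemma count_homWord (T : Finset V') (v' : (T : Set V')) (w : List (V × Bool)) :
    (homWord p T w).countP (fun l => l.1 = v') = w.countP (fun l => l.1 = p v') := by
  induction w with
  | nil => rfl
  | cons l w ih =>
    have e : homWord p T (l :: w) = (if l.2 then (liftSubVerts p T l.1).map (fun t => (t, true))
      else ((liftSubVerts p T l.1).reverse).map (fun t => (t, false))) ++ homWord p T w := rfl
    rw [e, List.countP_append, ih, List.countP_cons, add_comm]
    congr 1
    have h1 : (liftSubVerts p T l.1).countP (fun t => decide (t = v')) =
        if l.1 = p v' then 1 else 0 := by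
      have : (liftSubVerts p T l.1).countP (fun t => decide (t = v')) =
          (liftSubVerts p T l.1).count v' := by
        unfold List.count; congr 1; funext t; exact (beq_eq_decide t v').symm
      rw [this, (nodup_liftSubVerts T l.1).count]
      simp only [mem_liftSubVerts, eq_comm]
    simp only [decide_eq_true_eq]
    rw [← h1]
    split_ifs
    · rw [List.countP_map]; rfl
    · rw [List.countP_map, ← List.countP_reverse (l := liftSubVerts p T l.1)]; rfl

end Maps

/-! ### Survival of the vertex and injectivity -/

section Main

variable {V V' : Type*} [LinearOrder V'] [DecidableEq V]
variable {Γ : SimpleGraph V} {Γ' : SimpleGraph V'} {p : V' → V}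

omit [DecidableEq V] in
lemma listVal_mem {G : Type*} [Group G] (N : Subgroup G) (f : V → G) (w : List (V × Bool))
    (h : ∀ l ∈ w, f l.1 ∈ N) : listVal f w ∈ N := by
  induction w with
  | nil => exact N.one_mem
  | cons l w ih =>
    rw [listVal_cons]
    refine N.mul_mem ?_ (ih fun l' h' => h l' (List.mem_cons_of_mem _ h'))
    have := h l List.mem_cons_self
    split_ifs
    · exact this
    · exact N.inv_mem this

omit [LinearOrder V'] in
lemma kill_incl_perp {T : Set V'} (v' : T) {x : V'} (hx : Γ'.Adj v' x)
    {g : Raag (Γ'.induce T)} (hg : g ∈ perp (Γ'.induce T) v') :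
    kill Γ' {x}ᶜ (incl Γ' T g) = incl Γ' T g := by
  refine Subgroup.closure_induction
    (p := fun g _ => kill Γ' {x}ᶜ (incl Γ' T g) = incl Γ' T g) ?_ ?_ ?_ ?_ hg
  · rintro _ ⟨u, ⟨-, hu⟩, rfl⟩
    rw [incl_of]
    refine kill_mem Γ' fun h => hu ?_
    rw [Set.mem_singleton_iff] at h
    subst h
    exact hx
  · simp
  · intro a b _ _ ha hb
    rw [map_mul, map_mul, ha, hb]
  · intro a _ ha
    rw [map_inv, map_inv, ha]

/-- The heart of the matter. Suppose `T` contains, for every `t ∈ T₀` lying over a neighbour of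
`v`, a deck translate of `T₀` that moves `t` to a neighbour of `v'`. If a word `w` free of `v` is
mapped into the subgroup generated by the vertices of `T` not adjacent to `v'`, then `w`
commutes with `v`: otherwise killing the link of `v` changes `w`, so by injectivity on `G(Γ∖v)`
some lift `t ∈ T₀` of a neighbour of `v` is needed to express the image of `w` in `G(T₀)`, and the
translate taking `t` to a neighbour of `v'` shows that this neighbour is needed in `G(T)`. -/
lemma commute_of_phi_mem_perp (hp : IsGraphCovering Γ' Γ p) (v : V) (T₀ T : Finset V')
    (N : Subgroup (Raag Γ)) (hN : ∀ u, u ≠ v → Raag.of Γ u ∈ N)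
    (hinj : ∀ g ∈ N, ∀ h ∈ N, phiHom hp T₀ g = phiHom hp T₀ h → g = h)
    (v' : (T : Set V'))
    (hT : ∀ t ∈ T₀, Γ.Adj v (p t) → ∃ k : Γ' ≃g Γ', (∀ y, p (k y) = p y) ∧ Γ'.Adj v' (k t) ∧
      T₀.image k ⊆ T)
    (φ : Raag Γ →* Raag (Γ'.induce (T : Set V'))) (hφ : IsPhi Γ Γ' p T φ)
    (w : List (V × Bool)) (hw : ∀ x ∈ w, x.1 ≠ v)
    (hA : φ (wordProd Γ w) ∈ perp (Γ'.induce (T : Set V')) v') :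
    Commute (Raag.of Γ v) (wordProd Γ w) := by
  classical
  set Q : Set V := {u | ¬ Γ.Adj v u} with hQ
  set g := wordProd Γ w with hg
  suffices h : kill Γ Q g = g by
    rw [← h]; exact kill_link_commute Γ v g
  have hgN : g ∈ N := listVal_mem N _ w fun l hl => hN _ (hw l hl)
  have hkN : kill Γ Q g ∈ N := by
    change kill Γ Q (listVal _ w) ∈ N
    rw [map_listVal]
    refine listVal_mem N _ w fun l hl => ?_
    by_cases h : l.1 ∈ Q
    · rw [kill_mem Γ h]; exact hN _ (hw l hl)
    · rw [kill_notMem Γ h]; exact N.one_mem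
  refine hinj _ hkN _ hgN ?_
  rw [← kill_preimage_phiHom]
  have hfin : kill Γ' ((T₀.filter fun t => Γ.Adj v (p t) : Finset V') : Set V')ᶜ
      (phiHom hp T₀ g) = phiHom hp T₀ g := by
    refine kill_finset Γ' _ _ fun t ht => ?_
    obtain ⟨ht, hadj⟩ := Finset.mem_filter.mp ht
    obtain ⟨k, hk, hkt, hsub⟩ := hT t ht hadj
    apply shift_injective Γ' k
    rw [← kill_shift, shift_phiHom hp T₀ k hk, ← kill_phiHom hp hsub, kill_kill, Set.inter_comm,
      ← kill_kill, ← incl_phi hp hφ, kill_incl_perp v' hkt hA]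
  have hset : p ⁻¹' Q ∩ (T₀ : Set V') =
      ((T₀.filter fun t => Γ.Adj v (p t) : Finset V') : Set V')ᶜ ∩ (T₀ : Set V') := by
    ext t
    simp only [hQ, Set.mem_inter_iff, Set.mem_preimage, Set.mem_ofPred_eq, Finset.mem_coe,
      Set.mem_compl_iff, Finset.mem_filter, not_and]
    tauto
  rw [← kill_self_phiHom hp T₀ g, kill_kill, hset, ← kill_kill, kill_self_phiHom, hfin]

/-- Under the same hypotheses, the image of a reduced word `w` has a reduced form, over the HNN
splitting at `v'`, with one stable letter for each occurrence of `v` in `w`. -/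
lemma exists_reducedWord_phi (hp : IsGraphCovering Γ' Γ p) (v : V) (T : Finset V')
    (v' : (T : Set V')) (hv' : p v' = v)
    (φ : Raag Γ →* Raag (Γ'.induce (T : Set V'))) (hφ : IsPhi Γ Γ' p T φ)
    (hkey : ∀ w : List (V × Bool), (∀ x ∈ w, x.1 ≠ v) →
      φ (wordProd Γ w) ∈ perp (Γ'.induce (T : Set V')) v' →
      Commute (Raag.of Γ v) (wordProd Γ w))
    (w : List (V × Bool)) (hw : IsReducedWord Γ w) :
    ∃ r : HNNExtension.NormalWord.ReducedWord (Raag (Γ'.induce (T : Set V')))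
        (perp (Γ'.induce (T : Set V')) v') (perp (Γ'.induce (T : Set V')) v'),
      r.prod (MulEquiv.refl _) = toHNN (Γ'.induce (T : Set V')) v' (φ (wordProd Γ w)) ∧
      r.toList.length = w.countP (fun l => l.1 = v) := by
  set L := liftSubVerts p T v with hL
  set c : Raag (Γ'.induce (T : Set V')) :=
    ((L.erase v').map (Raag.of (Γ'.induce (T : Set V')))).prod with hc
  have hnd : L.Nodup := nodup_liftSubVerts T v
  have hmem : ∀ t ∈ L.erase v', t ≠ v' ∧ ¬ (Γ'.induce (T : Set V')).Adj v' t := fun t ht => by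
    obtain ⟨h1, h2⟩ := hnd.mem_erase_iff.mp ht
    refine ⟨h1, fun h3 => ?_⟩
    have h4 : p t = v := mem_liftSubVerts.mp h2
    have h5 : Γ.Adj (p v') (p t) := hp.adj h3
    rw [h4, hv'] at h5
    exact Γ.irrefl h5
  have hcA : c ∈ perp (Γ'.induce (T : Set V')) v' := by
    refine Subgroup.list_prod_mem _ fun x hx => ?_
    obtain ⟨t, ht, rfl⟩ := List.mem_map.mp hx
    exact Subgroup.subset_closure ⟨t, hmem t ht, rfl⟩
  have hφv : φ (Raag.of Γ v) = Raag.of (Γ'.induce (T : Set V')) v' * c := by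
    rw [hφ, hc, ← List.prod_cons, ← List.map_cons]
    have hperm : L.Perm (v' :: L.erase v') :=
      List.perm_cons_erase (mem_liftSubVerts.mpr hv')
    refine (hperm.map _).prod_eq' (List.pairwise_map.mpr ?_)
    refine List.Pairwise.imp_of_mem (R := fun _ _ => True) ?_ (List.pairwise_of_forall (by simp))
    intro s t hs ht _
    refine raag_commute (Γ'.induce (T : Set V')) fun h => ?_
    have h5 : Γ.Adj (p s) (p t) := hp.adj h
    rw [mem_liftSubVerts.mp hs, mem_liftSubVerts.mp ht] at h5
    exact Γ.irrefl h5
  obtain ⟨r, hr, hlen, -⟩ := exists_reducedWord (perp (Γ'.induce (T : Set V')) v') v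
    (fun u => φ (Raag.of Γ u)) c hcA
    (fun u => toHNN (Γ'.induce (T : Set V')) v' (φ (Raag.of Γ u))) (by
      rw [hφv, map_mul, toHNN_self, hc, toHNN_list]
      exact fun h => (hmem v' h).1 rfl)
    (fun u hu => by
      rw [hφ]
      refine toHNN_list (Γ'.induce (T : Set V')) v' _ fun h => hu ?_
      rw [← mem_liftSubVerts.mp h, hv']) w
    (fun w₁ w' w₂ b e hn hA => by
      rw [← map_listVal] at hA
      exact reduced_no_cancel Γ hw e (hkey w' hn hA))
  refine ⟨r, ?_, hlen⟩
  rw [hr]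
  change _ = toHNN (Γ'.induce (T : Set V')) v' (φ (listVal _ w))
  rw [map_listVal, map_listVal]

end Main

end RaagCover

/-- the key inductive lemma.  Let `p : Γ̃ → Γ` be a universal cover of a
finite connected graph with ordered vertex set, `v` a vertex of `Γ` and `T₀` a finite subtree
of `Γ̃`.  If the composite `G(Γ∖v) → G(Γ) → G(T₀)` of the natural map induced by the inclusion
`Γ∖v ≤ Γ` with `φ(Γ,T₀)` is injective, then for each `v′ ∈ p⁻¹(v)` there is a finite subtree
`T ⊇ T₀ ∪ {v′}` of `Γ̃` such that `φ(Γ,T)` is `{v′}`-surviving and injective. -/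
theorem key_lemma {V V' : Type} [Fintype V] [DecidableEq V] [LinearOrder V']
    (Γ : SimpleGraph V) (hΓ : Γ.Connected)
    (Γ' : SimpleGraph V') (p : V' → V) (hp : IsUniversalCover Γ' Γ p)
    (v : V)
    (T₀ : Finset V') (hT₀ : (Γ'.induce (T₀ : Set V')).IsTree)
    (ι : Raag (Γ.induce {u : V | u ≠ v}) →* Raag Γ)
    (hι : ∀ u : {u : V | u ≠ v}, ι (Raag.of (Γ.induce {u : V | u ≠ v}) u) = Raag.of Γ ↑u)
    (φ₀ : Raag Γ →* Raag (Γ'.induce (T₀ : Set V'))) (hφ₀ : IsPhi Γ Γ' p T₀ φ₀)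
    (hinj : Function.Injective (φ₀.comp ι)) :
    ∀ v' : V', p v' = v →
      ∃ T : Finset V', T₀ ⊆ T ∧ v' ∈ T ∧ (Γ'.induce (T : Set V')).IsTree ∧
        ∃ φ : Raag Γ →* Raag (Γ'.induce (T : Set V')),
          IsPhi Γ Γ' p T φ ∧ IsSurviving Γ Γ' p T {v'} ∧ Function.Injective φ := by
  classical
  intro v' hv'
  have hc : IsGraphCovering Γ' Γ p := hp.1
  -- for each `t ∈ T₀` over a neighbour of `v`, a deck transformation taking `t` next to `v'`
  have hdeck : ∀ t : V', ∃ k : Γ' ≃g Γ', (∀ y, p (k y) = p y) ∧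
      (Γ.Adj v (p t) → Γ'.Adj v' (k t)) := by
    intro t
    by_cases h : Γ.Adj v (p t)
    · obtain ⟨x', hx', hpx⟩ := (hc.bijOn v').surjOn (show p t ∈ Γ.neighborSet (p v') by
        rw [hv']; exact h)
      obtain ⟨k, hk, hk'⟩ := RaagCover.exists_deck hp hpx
      exact ⟨k, hk', fun _ => by rw [hk]; exact hx'⟩
    · exact ⟨RelIso.refl _, fun _ => rfl, fun h' => absurd h' h⟩
  choose k hk hkadj using hdeck
  obtain ⟨T, hsub, hT⟩ := RaagCover.exists_subtree hp.2
    (insert v' (T₀ ∪ T₀.biUnion fun t => T₀.image (k t))) (Finset.insert_nonempty _ _)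
  have hv'T : v' ∈ T := hsub (Finset.mem_insert_self _ _)
  have hT₀T : T₀ ⊆ T := fun t ht =>
    hsub (Finset.mem_insert_of_mem (Finset.mem_union_left _ ht))
  have hkT : ∀ t ∈ T₀, T₀.image (k t) ⊆ T := fun t ht y hy =>
    hsub (Finset.mem_insert_of_mem (Finset.mem_union_right _
      (Finset.mem_biUnion.mpr ⟨t, ht, hy⟩)))
  obtain ⟨φ, hφ⟩ := RaagCover.exists_phi hc T
  have hN : ∀ u, u ≠ v → Raag.of Γ u ∈ ι.range := fun u hu => ⟨_, hι ⟨u, hu⟩⟩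
  have hinj' : ∀ g ∈ ι.range, ∀ h ∈ ι.range,
      RaagCover.phiHom hc T₀ g = RaagCover.phiHom hc T₀ h → g = h := by
    rintro _ ⟨a, rfl⟩ _ ⟨b, rfl⟩ e
    rw [← RaagCover.incl_phi hc hφ₀, ← RaagCover.incl_phi hc hφ₀] at e
    exact congrArg ι (hinj (RaagCover.incl_injective Γ' _ e))
  have hred := RaagCover.exists_reducedWord_phi hc v T ⟨v', hv'T⟩ hv' φ hφ
    (RaagCover.commute_of_phi_mem_perp hc v T₀ T ι.range hN hinj' ⟨v', hv'T⟩
      (fun t ht h => ⟨k t, hk t, hkadj t h, hkT t ht⟩) φ hφ)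
  refine ⟨T, hT₀T, hv'T, hT, φ, hφ, ?_, ?_⟩
  · rintro w hw x hx rfl ⟨w₁, w', w₂, b, e, hsupp⟩
    -- a cancellation would give an expression with two fewer letters `v'`
    obtain ⟨r, hr, hlen⟩ := hred w hw
    obtain ⟨r', hr', hlen'⟩ := RaagCover.exists_reducedWord_le (Γ'.induce (T : Set V'))
      ⟨x, hx⟩ (w₁ ++ (w' ++ w₂))
    have hprod : r.prod (MulEquiv.refl _) = r'.prod (MulEquiv.refl _) := by
      rw [hr, hr', ← RaagCover.wordProd_homWord hφ, e]
      exact congrArg _ (RaagCover.wordProd_remove _ _ _ _ _ _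
        (RaagCover.commute_of_supp _ _ _ hsupp))
    have hl := congrArg List.length
      (HNNExtension.ReducedWord.map_fst_eq_and_of_prod_eq _ hprod).1
    rw [List.length_map, List.length_map, hlen] at hl
    have hcount := RaagCover.count_homWord (p := p) T ⟨x, hx⟩ w
    rw [e] at hcount
    simp [hv'] at hcount hlen' hl
    omega
  · rw [injective_iff_map_eq_one]
    intro g hg
    obtain ⟨w, hw, rfl⟩ := RaagCover.exists_reduced Γ g
    obtain ⟨r, hr, hlen⟩ := hred w hw
    -- the trivial element has no stable letter, so `w` is a word in `Γ∖v`
    have hprod : r.prod (MulEquiv.refl _) =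
        (HNNExtension.NormalWord.ReducedWord.empty _ _ _).prod (MulEquiv.refl _) := by
      rw [hr, hg]
      simp [HNNExtension.NormalWord.ReducedWord.prod]
    have hl := congrArg List.length
      (HNNExtension.ReducedWord.map_fst_eq_and_of_prod_eq _ hprod).1
    rw [List.length_map, List.length_map, hlen] at hl
    have hno : ∀ l ∈ w, l.1 ≠ v := by
      have := List.countP_eq_zero.mp hl
      simpa using this
    refine hinj' _ (RaagCover.listVal_mem _ _ w fun l hl => hN _ (hno l hl)) _ (one_mem _) ?_
    change RaagCover.phiHom hc T₀ (wordProd Γ w) = _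
    rw [← RaagCover.kill_phiHom hc hT₀T, ← RaagCover.incl_phi hc hφ, hg]
    simp
end
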